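/- There exist absolute constants c > 0 and C ≥ 1 such that for all M ≥ 1 and all finite nonempty sets A, B ⊆ R with |A·A| ≤ M·|A| and |A| ≤ |B|², the additive energy satisfies E⁺(A,B) ≤ C·M^C·|B|^(5/3)·|A|^(5/6 − c). -/

import Mathlib

open Pointwise

/-- Additive energy `E⁺(A,B) = #{(a,a',b,b') ∈ A×A×B×B : a − b = a' − b'}`. -/
noncomputable def addE (A B : Finset ℝ) : ℕ :=
  Set.ncard {x : ℝ × ℝ × ℝ × ℝ |
    x.1 ∈ A ∧ x.2.1 ∈ A ∧ x.2.2.1 ∈ B ∧ x.2.2.2 ∈ B ∧ x.1 - x.2.2.1 = x.2.1 - x.2.2.2}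


lemma card_le_image_add_pairs {α : Type*} [DecidableEq α] (f : α → ℕ) (S : Finset α) :
    S.card ≤ (S.image f).card +
      ((S ×ˢ S).filter (fun p => p.1 ≠ p.2 ∧ f p.1 = f p.2)).card := by
  classical
  induction S using Finset.induction_on with
  | empty => simp
  | insert a S ha ih =>
    rw [Finset.card_insert_of_notMem ha]
    have hsub : (S ×ˢ S).filter (fun p => p.1 ≠ p.2 ∧ f p.1 = f p.2) ⊆
        ((insert a S) ×ˢ (insert a S)).filter (fun p => p.1 ≠ p.2 ∧ f p.1 = f p.2) := by
      intro p hp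
      simp only [Finset.mem_filter, Finset.mem_product, Finset.mem_insert] at hp ⊢
      tauto
    by_cases h : f a ∈ S.image f
    · obtain ⟨b, hb, hab⟩ := Finset.mem_image.1 h
      have h1 : ((S ×ˢ S).filter (fun p => p.1 ≠ p.2 ∧ f p.1 = f p.2)).card <
          (((insert a S) ×ˢ (insert a S)).filter (fun p => p.1 ≠ p.2 ∧ f p.1 = f p.2)).card := by
        apply Finset.card_lt_card
        refine ⟨hsub, fun h' => ?_⟩
        have : (a, b) ∈ (S ×ˢ S).filter (fun p => p.1 ≠ p.2 ∧ f p.1 = f p.2) := by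
          apply h'
          simp only [Finset.mem_filter, Finset.mem_product, Finset.mem_insert]
          refine ⟨⟨by simp, Or.inr hb⟩, ?_, hab.symm⟩
          rintro rfl; exact ha hb
        simp only [Finset.mem_filter, Finset.mem_product] at this
        exact ha this.1.1
      have h2 : (S.image f).card ≤ ((insert a S).image f).card :=
        Finset.card_le_card (Finset.image_subset_image (Finset.subset_insert _ _))
      omega
    · have h1 := Finset.card_le_card hsub
      rw [Finset.image_insert, Finset.card_insert_of_notMem h]
      omega

/-- rank of `x` in `X` -/
noncomputable def rk (X : Finset ℝ) (x : ℝ) : ℕ := (X.filter (fun y => y < x)).card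

lemma rk_mono (X : Finset ℝ) {x y : ℝ} (h : x ≤ y) : rk X x ≤ rk X y := by
  apply Finset.card_le_card
  intro z hz
  simp only [Finset.mem_filter] at hz ⊢
  exact ⟨hz.1, lt_of_lt_of_le hz.2 h⟩

lemma rk_strict (X : Finset ℝ) {x y : ℝ} (hx : x ∈ X) (h : x < y) : rk X x < rk X y := by
  apply Finset.card_lt_card
  refine ⟨?_, fun h' => ?_⟩
  · intro z hz
    simp only [Finset.mem_filter] at hz ⊢
    exact ⟨hz.1, lt_trans hz.2 h⟩
  · have : x ∈ X.filter (fun y => y < x) := h' (by simp [hx, h])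
    simp at this

lemma rk_lt (X : Finset ℝ) {x : ℝ} (hx : x ∈ X) : rk X x < X.card := by
  apply Finset.card_lt_card
  refine ⟨Finset.filter_subset _ _, fun h' => ?_⟩
  have := h' hx
  simp at this

lemma rk_inj (X : Finset ℝ) {x y : ℝ} (hx : x ∈ X) (hy : y ∈ X) (h : rk X x = rk X y) : x = y := by
  rcases lt_trichotomy x y with h1 | h1 | h1
  · exact absurd h (rk_strict X hx h1).ne
  · exact h1
  · exact absurd h (rk_strict X hy h1).ne'

lemma cell_pairs (X : Finset ℝ) (u : ℕ) (hu : 0 < u) :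
    ((X ×ˢ X).filter (fun p => rk X p.1 / u = rk X p.2 / u)).card ≤ X.card * u := by
  classical
  have h1 : ∀ x ∈ X, (X.filter (fun y => rk X x / u = rk X y / u)).card ≤ u := by
    intro x hx
    have : (X.filter (fun y => rk X x / u = rk X y / u)).card ≤
        (Finset.Ico (u * (rk X x / u)) (u * (rk X x / u) + u)).card := by
      apply Finset.card_le_card_of_injOn (fun y => rk X y)
      · intro y hy
        simp only [Finset.coe_filter, Set.mem_ofPred_eq] at hy
        simp only [Finset.coe_Ico, Set.mem_Ico]
        rw [hy.2]
        have := Nat.div_add_mod (rk X y) u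
        have := Nat.mod_lt (rk X y) hu
        omega
      · intro y hy z hz h
        simp only [Finset.coe_filter, Set.mem_ofPred_eq] at hy hz
        exact rk_inj X hy.1 hz.1 h
    simpa using this
  have h2 : ((X ×ˢ X).filter (fun p => rk X p.1 / u = rk X p.2 / u)).card =
      ∑ x ∈ X, (X.filter (fun y => rk X x / u = rk X y / u)).card := by
    simp only [Finset.card_filter, Finset.sum_product]
  rw [h2]
  calc _ ≤ ∑ x ∈ X, u := Finset.sum_le_sum h1
    _ = _ := by simp

/-- incidences between grid `X × Y` and lines `y = αx + β` -/
noncomputable def inc (L : Finset (ℝ × ℝ)) (X Y : Finset ℝ) : Finset ((ℝ × ℝ) × ℝ) :=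
  (L ×ˢ X).filter (fun p => p.1.1 * p.2 + p.1.2 ∈ Y)

lemma inc_card (L : Finset (ℝ × ℝ)) (X Y : Finset ℝ) :
    (inc L X Y).card = ∑ l ∈ L, (X.filter (fun x => l.1 * x + l.2 ∈ Y)).card := by
  simp only [inc, Finset.card_filter, Finset.sum_product]

lemma line_cells (X Y : Finset ℝ) (l : ℝ × ℝ) (hl : l.1 ≠ 0) (s u v : ℕ)
    (hX : X.card ≤ s * u) (hY : Y.card ≤ s * v) :
    (X.filter (fun x => l.1 * x + l.2 ∈ Y)).card ≤ (2 * s - 1) +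
      ((X ×ˢ X).filter (fun p => (l.1 * p.1 + l.2 ∈ Y ∧ l.1 * p.2 + l.2 ∈ Y) ∧ p.1 ≠ p.2 ∧
        rk X p.1 / u = rk X p.2 / u ∧
        rk Y (l.1 * p.1 + l.2) / v = rk Y (l.1 * p.2 + l.2) / v)).card := by
  classical
  set S := X.filter (fun x => l.1 * x + l.2 ∈ Y) with hS
  set f : ℝ → ℕ := fun x => if 0 < l.1 then rk X x / u + rk Y (l.1 * x + l.2) / v
    else rk X x / u + (s - 1 - rk Y (l.1 * x + l.2) / v) with hf
  have hi : ∀ x ∈ S, rk X x / u < s := by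
    intro x hx
    rw [hS, Finset.mem_filter] at hx
    apply Nat.div_lt_of_lt_mul
    rw [mul_comm]
    exact lt_of_lt_of_le (rk_lt X hx.1) hX
  have hj : ∀ x ∈ S, rk Y (l.1 * x + l.2) / v < s := by
    intro x hx
    rw [hS, Finset.mem_filter] at hx
    apply Nat.div_lt_of_lt_mul
    rw [mul_comm v s]
    exact lt_of_lt_of_le (rk_lt Y hx.2) hY
  have himg : (S.image f).card ≤ 2 * s - 1 := by
    have : S.image f ⊆ Finset.range (2 * s - 1) := by
      intro k hk
      obtain ⟨x, hx, rfl⟩ := Finset.mem_image.1 hk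
      have h1 := hi x hx
      have h2 := hj x hx
      simp only [hf, Finset.mem_range]
      generalize rk X x / u = i at *
      generalize rk Y (l.1 * x + l.2) / v = j at *
      split_ifs <;> omega
    simpa using Finset.card_le_card this
  have key : ∀ x ∈ S, ∀ y ∈ S, x ≤ y → f x = f y → rk X x / u = rk X y / u ∧
      rk Y (l.1 * x + l.2) / v = rk Y (l.1 * y + l.2) / v := by
    intro x hx y hy hxy h
    have h1 := hi x hx
    have h2 := hj x hx
    have h3 := hi y hy
    have h4 := hj y hy
    have h5 : rk X x / u ≤ rk X y / u := Nat.div_le_div_right (rk_mono X hxy)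
    simp only [hf] at h
    split_ifs at h with h0
    · have h6 : rk Y (l.1 * x + l.2) / v ≤ rk Y (l.1 * y + l.2) / v :=
        Nat.div_le_div_right (rk_mono Y (by nlinarith))
      omega
    · have h0' : l.1 < 0 := lt_of_le_of_ne (not_lt.1 h0) hl
      have h6 : rk Y (l.1 * y + l.2) / v ≤ rk Y (l.1 * x + l.2) / v :=
        Nat.div_le_div_right (rk_mono Y (by nlinarith))
      omega
  refine (card_le_image_add_pairs f S).trans (add_le_add himg (Finset.card_le_card ?_))
  rintro ⟨x, y⟩ hp
  simp only [Finset.mem_filter, Finset.mem_product] at hp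
  obtain ⟨⟨hx, hy⟩, hne, hfe⟩ := hp
  have hx' := hx
  have hy' := hy
  rw [hS, Finset.mem_filter] at hx' hy'
  simp only [Finset.mem_filter, Finset.mem_product]
  refine ⟨⟨hx'.1, hy'.1⟩, ⟨hx'.2, hy'.2⟩, hne, ?_⟩
  rcases le_total x y with h | h
  · exact key x hx y hy h hfe
  · have := key y hy x hx h hfe.symm
    exact ⟨this.1.symm, this.2.symm⟩

lemma st_cells (L : Finset (ℝ × ℝ)) (X Y : Finset ℝ) (hL : ∀ l ∈ L, l.1 ≠ 0) (s u v : ℕ)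
    (hu : 0 < u) (hv : 0 < v)
    (hX : X.card ≤ s * u) (hY : Y.card ≤ s * v) :
    (inc L X Y).card ≤ (2 * s - 1) * L.card + (X.card * u) * (Y.card * v) := by
  classical
  rw [inc_card]
  set P : ℝ × ℝ → Finset (ℝ × ℝ) := fun l =>
    (X ×ˢ X).filter (fun p => (l.1 * p.1 + l.2 ∈ Y ∧ l.1 * p.2 + l.2 ∈ Y) ∧ p.1 ≠ p.2 ∧
        rk X p.1 / u = rk X p.2 / u ∧
        rk Y (l.1 * p.1 + l.2) / v = rk Y (l.1 * p.2 + l.2) / v) with hP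
  have h1 : ∑ l ∈ L, (X.filter (fun x => l.1 * x + l.2 ∈ Y)).card ≤
      ∑ l ∈ L, ((2 * s - 1) + (P l).card) :=
    Finset.sum_le_sum (fun l hl => line_cells X Y l (hL l hl) s u v hX hY)
  have h2 : ∑ l ∈ L, (P l).card ≤ (X.card * u) * (Y.card * v) := by
    rw [← Finset.card_sigma]
    refine le_trans ?_ (Nat.mul_le_mul (cell_pairs X u hu) (cell_pairs Y v hv))
    rw [← Finset.card_product]
    apply Finset.card_le_card_of_injOn
      (fun q => (q.2, (q.1.1 * q.2.1 + q.1.2, q.1.1 * q.2.2 + q.1.2)))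
    · rintro ⟨l, p⟩ hp
      simp only [Finset.coe_sigma, Set.mem_sigma_iff, Finset.mem_coe, hP, Finset.mem_filter,
        Finset.mem_product] at hp
      simp only [Finset.coe_product, Set.mem_prod, Finset.mem_coe, Finset.mem_filter,
        Finset.mem_product]
      tauto
    · rintro ⟨⟨a, b⟩, ⟨x, y⟩⟩ hp ⟨⟨a', b'⟩, ⟨x', y'⟩⟩ hp' h
      simp only [Finset.coe_sigma, Set.mem_sigma_iff, Finset.mem_coe, hP, Finset.mem_filter,
        Finset.mem_product] at hp
      simp only [Prod.mk.injEq] at h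
      obtain ⟨⟨rfl, rfl⟩, h3, h4⟩ := h
      have hne : x - y ≠ 0 := sub_ne_zero.2 hp.2.2.2.1
      have ha : a = a' := by
        apply mul_right_cancel₀ hne
        linarith
      subst ha
      have hb : b = b' := by linarith
      subst hb
      rfl
  rw [Finset.sum_add_distrib, Finset.sum_const, smul_eq_mul] at h1
  nlinarith

/-- Szemeredi-Trotter for grids -/
theorem st_grid (L : Finset (ℝ × ℝ)) (X Y : Finset ℝ) (hL : ∀ l ∈ L, l.1 ≠ 0) :
    ((inc L X Y).card < 2 * L.card) ∨
      ((inc L X Y).card : ℝ) ^ 3 ≤ 512 * (X.card : ℝ) ^ 2 * (Y.card : ℝ) ^ 2 * (L.card : ℝ) ^ 2 := by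
  classical
  by_cases h0 : (inc L X Y).card < 2 * L.card
  · exact Or.inl h0
  right
  push Not at h0
  set I := (inc L X Y).card with hI
  have hIX : I ≤ L.card * X.card := by
    rw [hI, ← Finset.card_product]
    exact Finset.card_filter_le _ _
  have hIY : I ≤ L.card * Y.card := by
    rw [hI, ← Finset.card_product]
    apply Finset.card_le_card_of_injOn (fun p => (p.1, p.1.1 * p.2 + p.1.2))
    · rintro ⟨l, x⟩ hp
      simp only [inc, Finset.coe_filter, Finset.mem_product, Set.mem_ofPred_eq] at hp
      simp only [Finset.coe_product, Set.mem_prod, Finset.mem_coe]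
      tauto
    · rintro ⟨l, x⟩ hp ⟨l', x'⟩ hp' h
      simp only [inc, Finset.coe_filter, Finset.mem_product, Set.mem_ofPred_eq] at hp
      simp only [Prod.mk.injEq] at h
      obtain ⟨rfl, h⟩ := h
      have : x = x' := by
        apply mul_left_cancel₀ (hL l hp.1.1)
        linarith
      rw [this]
  by_cases hLz : L.card = 0
  · have : I = 0 := by simpa [hLz] using hIX
    rw [this]; norm_num; positivity
  have hLp : 0 < L.card := Nat.pos_of_ne_zero hLz
  have hXp : 0 < X.card := by
    by_contra h
    have : X.card = 0 := by omega
    rw [this] at hIX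
    omega
  have hYp : 0 < Y.card := by
    by_contra h
    have : Y.card = 0 := by omega
    rw [this] at hIY
    omega
  set s := max 1 (I / (4 * L.card)) with hs
  have hs1 : 1 ≤ s := le_max_left _ _
  have hle : I / (4 * L.card) * (4 * L.card) ≤ I := Nat.div_mul_le_self _ _
  have hlt : I < (I / (4 * L.card) + 1) * (4 * L.card) := by
    have := Nat.lt_div_mul_add (a := I) (b := 4 * L.card) (by omega)
    linarith
  have hsX : s ≤ X.card := by
    apply max_le hXp
    by_contra h
    push Not at h
    nlinarith
  have hsY : s ≤ Y.card := by
    apply max_le hYp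
    by_contra h
    push Not at h
    nlinarith
  have hs2 : I ≤ 8 * s * L.card := by
    have : I / (4 * L.card) + 1 ≤ 2 * s := by
      have := le_max_right 1 (I / (4 * L.card))
      omega
    nlinarith
  have hs3 : 2 * ((2 * s - 1) * L.card) ≤ I := by
    rcases le_total (I / (4 * L.card)) 1 with h | h
    · have : s = 1 := max_eq_left h
      rw [this]; omega
    · have : s = I / (4 * L.card) := max_eq_right h
      rw [← this] at hle
      have : 2 * s - 1 ≤ 2 * s := by omega
      nlinarith
  have main := st_cells L X Y hL s (X.card / s + 1) (Y.card / s + 1) (Nat.succ_pos _) (Nat.succ_pos _)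
    (by have := Nat.lt_div_mul_add (a := X.card) (b := s) (by omega); nlinarith)
    (by have := Nat.lt_div_mul_add (a := Y.card) (b := s) (by omega); nlinarith)
  have hu : s * (X.card / s + 1) ≤ 2 * X.card := by
    have := Nat.div_mul_le_self X.card s
    nlinarith
  have hv : s * (Y.card / s + 1) ≤ 2 * Y.card := by
    have := Nat.div_mul_le_self Y.card s
    nlinarith
  rw [← hI] at main
  have m2 : I ≤ 2 * ((X.card * (X.card / s + 1)) * (Y.card * (Y.card / s + 1))) := by omega
  have m3 : I * s ^ 2 ≤ 8 * (X.card ^ 2 * Y.card ^ 2) := by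
    calc I * s ^ 2 ≤ 2 * ((X.card * (X.card / s + 1)) * (Y.card * (Y.card / s + 1))) * s ^ 2 :=
          Nat.mul_le_mul_right _ m2
      _ = 2 * (X.card * Y.card) * ((s * (X.card / s + 1)) * (s * (Y.card / s + 1))) := by ring
      _ ≤ 2 * (X.card * Y.card) * ((2 * X.card) * (2 * Y.card)) :=
          Nat.mul_le_mul_left _ (Nat.mul_le_mul hu hv)
      _ = _ := by ring
  have m4 : I ^ 3 ≤ 512 * X.card ^ 2 * Y.card ^ 2 * L.card ^ 2 := by
    calc I ^ 3 = I * I ^ 2 := by ring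
      _ ≤ I * (8 * s * L.card) ^ 2 := by gcongr
      _ = 64 * L.card ^ 2 * (I * s ^ 2) := by ring
      _ ≤ 64 * L.card ^ 2 * (8 * (X.card ^ 2 * Y.card ^ 2)) := Nat.mul_le_mul_left _ m3
      _ = _ := by ring
  exact_mod_cast m4

/-- number of representations `x = a - a'` in `S` -/
noncomputable def rep (S : Finset ℝ) (x : ℝ) : ℕ := (S.filter (fun a => a - x ∈ S)).card

/-- nonzero popular differences -/
noncomputable def pop (S : Finset ℝ) (t : ℕ) : Finset ℝ :=
  ((S - S).erase 0).filter (fun x => t ≤ rep S x)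

lemma mem_pop {S : Finset ℝ} {t : ℕ} (ht : 1 ≤ t) {x : ℝ} :
    x ∈ pop S t ↔ x ≠ 0 ∧ t ≤ rep S x := by
  simp only [pop, Finset.mem_filter, Finset.mem_erase]
  constructor
  · rintro ⟨⟨h, _⟩, h'⟩; exact ⟨h, h'⟩
  · rintro ⟨h, h'⟩
    refine ⟨⟨h, ?_⟩, h'⟩
    have : 0 < rep S x := by omega
    obtain ⟨a, ha⟩ := Finset.card_pos.1 this
    rw [Finset.mem_filter] at ha
    have := Finset.sub_mem_sub ha.1 ha.2
    simpa using this

lemma rep_le (S : Finset ℝ) (x : ℝ) : rep S x ≤ S.card := Finset.card_filter_le _ _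

lemma rep_zero (S : Finset ℝ) : rep S 0 = S.card := by
  simp [rep]

lemma rep_dil {A S : Finset ℝ} {q : ℝ} (hq : q ∈ A) (hq0 : q ≠ 0) (x : ℝ) :
    rep S x ≤ rep (A * S) (q * x) := by
  apply Finset.card_le_card_of_injOn (fun a => q * a)
  · intro a ha
    simp only [Finset.coe_filter, Set.mem_ofPred_eq] at ha ⊢
    refine ⟨Finset.mul_mem_mul hq ha.1, ?_⟩
    have := Finset.mul_mem_mul hq ha.2
    rwa [mul_sub] at this
  · intro a _ b _ h
    exact mul_left_cancel₀ hq0 h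

lemma pop_dil {A S : Finset ℝ} {q : ℝ} (hq : q ∈ A) (hq0 : q ≠ 0) {t : ℕ} (ht : 1 ≤ t) {x : ℝ}
    (hx : x ∈ pop S t) : q * x ∈ pop (A * S) t := by
  rw [mem_pop ht] at hx ⊢
  exact ⟨mul_ne_zero hq0 hx.1, hx.2.trans (rep_dil hq hq0 x)⟩

lemma pop_bound {A S : Finset ℝ} (hA0 : (0 : ℝ) ∉ A) (hA : A.Nonempty) {K : ℝ} (hK : 1 ≤ K)
    (h1 : (S.card : ℝ) ≤ K * A.card) (h2 : ((A * S).card : ℝ) ≤ K * A.card) {t : ℕ} (ht : 1 ≤ t) :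
    (t : ℝ) ^ 3 * (pop S t).card ≤ 512 * K ^ 4 * (A.card : ℝ) ^ 3 := by
  classical
  set D := pop S t with hD
  set L : Finset (ℝ × ℝ) := (A ×ˢ S).image (fun p => (p.1⁻¹, -p.2)) with hL
  have hLc : L.card = A.card * S.card := by
    rw [hL, Finset.card_image_of_injective, Finset.card_product]
    rintro ⟨a, b⟩ ⟨a', b'⟩ h
    simpa using h
  have hL0 : ∀ l ∈ L, l.1 ≠ 0 := by
    intro l hl
    obtain ⟨⟨a, b⟩, hp, rfl⟩ := Finset.mem_image.1 hl
    rw [Finset.mem_product] at hp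
    have : a ≠ 0 := fun h => hA0 (h ▸ hp.1)
    simpa using this
  have hI : t * D.card * A.card ≤ (inc L (A * S) D).card := by
    have e1 : t * D.card ≤ (D.sigma (fun x => S.filter (fun a => a - x ∈ S))).card := by
      rw [Finset.card_sigma, mul_comm, ← smul_eq_mul, ← Finset.sum_const]
      apply Finset.sum_le_sum
      intro x hx
      exact ((mem_pop ht).1 hx).2
    calc t * D.card * A.card ≤ (D.sigma (fun x => S.filter (fun a => a - x ∈ S))).card * A.card :=
          Nat.mul_le_mul_right _ e1
      _ = ((D.sigma (fun x => S.filter (fun a => a - x ∈ S))) ×ˢ A).card := by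
          rw [Finset.card_product]
      _ ≤ _ := by
          apply Finset.card_le_card_of_injOn
            (fun p => (((p.2)⁻¹, -(p.1.2 - p.1.1)), p.2 * p.1.2))
          · rintro ⟨⟨x, a⟩, q⟩ hp
            simp only [Finset.coe_product, Set.mem_prod, Finset.mem_coe, Finset.mem_sigma,
              Finset.mem_filter] at hp
            obtain ⟨⟨hx, ha, hax⟩, hq⟩ := hp
            have hq0 : q ≠ 0 := fun h => hA0 (h ▸ hq)
            simp only [inc, Finset.coe_filter, Set.mem_ofPred_eq, Finset.mem_product]
            refine ⟨⟨?_, Finset.mul_mem_mul hq ha⟩, ?_⟩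
            · rw [hL]
              exact Finset.mem_image.2 ⟨(q, a - x), Finset.mem_product.2 ⟨hq, hax⟩, rfl⟩
            · have : q⁻¹ * (q * a) + -(a - x) = x := by field_simp; ring
              rw [this]; exact hx
          · rintro ⟨⟨x, a⟩, q⟩ hp ⟨⟨x', a'⟩, q'⟩ hp' h
            simp only [Finset.coe_product, Set.mem_prod, Finset.mem_coe, Finset.mem_sigma,
              Finset.mem_filter] at hp
            obtain ⟨⟨hx, ha, hax⟩, hq⟩ := hp
            have hq0 : q ≠ 0 := fun h => hA0 (h ▸ hq)
            simp only [Prod.mk.injEq, inv_inj] at h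
            obtain ⟨⟨rfl, h3⟩, h4⟩ := h
            have : a = a' := mul_left_cancel₀ hq0 h4
            subst this
            have : x = x' := by linarith
            subst this
            rfl
  have hn : 0 < (A.card : ℝ) := by exact_mod_cast hA.card_pos
  set n : ℝ := (A.card : ℝ) with hn_def
  have hI' : (t : ℝ) * D.card * n ≤ ((inc L (A * S) D).card : ℝ) := by
    rw [hn_def]; exact_mod_cast hI
  by_cases hDe : D.card = 0
  · rw [hDe]; simp; positivity
  have hDp : 0 < (D.card : ℝ) := by exact_mod_cast Nat.pos_of_ne_zero hDe
  have htS : (t : ℝ) ≤ K * n := by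
    obtain ⟨x, hx⟩ := Finset.card_pos.1 (Nat.pos_of_ne_zero hDe)
    have := ((mem_pop ht).1 hx).2.trans (rep_le S x)
    have : (t : ℝ) ≤ S.card := by exact_mod_cast this
    linarith
  have ht' : (1 : ℝ) ≤ t := by exact_mod_cast ht
  have hK2 : K ^ 3 ≤ K ^ 4 := pow_le_pow_right₀ hK (by norm_num)
  rcases st_grid L (A * S) D hL0 with h | h
  · have h' : ((inc L (A * S) D).card : ℝ) < 2 * (n * S.card) := by
      rw [hLc] at h
      rw [hn_def]
      exact_mod_cast h
    have h3 : (t : ℝ) * D.card ≤ 2 * (K * n) := by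
      have : (t : ℝ) * D.card * n ≤ (2 * (K * n)) * n := by nlinarith
      exact le_of_mul_le_mul_right this hn
    calc (t : ℝ) ^ 3 * D.card = (t : ℝ) ^ 2 * (t * D.card) := by ring
      _ ≤ (K * n) ^ 2 * (2 * (K * n)) := by gcongr
      _ = 2 * K ^ 3 * n ^ 3 := by ring
      _ ≤ 512 * K ^ 4 * n ^ 3 := by
          gcongr
          nlinarith [pow_pos (lt_of_lt_of_le one_pos hK) 3]
  · rw [hLc] at h
    push_cast at h
    have h3 : ((t : ℝ) * D.card * n) ^ 3 ≤
        512 * (K * n) ^ 2 * (D.card : ℝ) ^ 2 * (n * (K * n)) ^ 2 := by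
      calc ((t : ℝ) * D.card * n) ^ 3 ≤ ((inc L (A * S) D).card : ℝ) ^ 3 := by gcongr
        _ ≤ _ := h
        _ ≤ _ := by gcongr
    have h4 : (((t : ℝ) ^ 3 * D.card) * ((D.card : ℝ) ^ 2 * n ^ 3)) ≤
        (512 * K ^ 4 * n ^ 3) * ((D.card : ℝ) ^ 2 * n ^ 3) := by
      calc _ = ((t : ℝ) * D.card * n) ^ 3 := by ring
        _ ≤ _ := h3
        _ = _ := by ring
    exact le_of_mul_le_mul_right h4 (by positivity)

lemma rep_sup {A : Finset ℝ} (hA0 : (0 : ℝ) ∉ A) (hA : A.Nonempty) {K : ℝ} (hK : 1 ≤ K)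
    (h1 : ((A * A).card : ℝ) ≤ K * A.card) (h2 : ((A * (A * A)).card : ℝ) ≤ K * A.card)
    {x : ℝ} (hx : x ≠ 0) :
    (rep A x : ℝ) ^ 3 ≤ 512 * K ^ 4 * (A.card : ℝ) ^ 2 := by
  classical
  by_cases ht : 1 ≤ rep A x
  · have hb := pop_bound hA0 hA hK h1 h2 ht
    have : A.card ≤ (pop (A * A) (rep A x)).card := by
      apply Finset.card_le_card_of_injOn (fun q => q * x)
      · intro q hq
        have hq0 : q ≠ 0 := fun h => hA0 (h ▸ hq)
        exact pop_dil hq hq0 ht ((mem_pop ht).2 ⟨hx, le_rfl⟩)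
      · intro a _ b _ h
        exact mul_right_cancel₀ hx h
    have hn : 0 < (A.card : ℝ) := by exact_mod_cast hA.card_pos
    have h3 : (A.card : ℝ) ≤ (pop (A * A) (rep A x)).card := by exact_mod_cast this
    have : ((rep A x : ℝ) ^ 3) * A.card ≤ (512 * K ^ 4 * (A.card : ℝ) ^ 2) * A.card := by
      calc _ ≤ (rep A x : ℝ) ^ 3 * (pop (A * A) (rep A x)).card := by gcongr
        _ ≤ _ := hb
        _ = _ := by ring
    exact le_of_mul_le_mul_right this hn
  · have : rep A x = 0 := by omega
    rw [this]; norm_num; positivity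

/-- pairs in `X × Y` whose negated sum lies in `Z` -/
noncomputable def tri (X Y Z : Finset ℝ) : Finset (ℝ × ℝ) :=
  (X ×ˢ Y).filter (fun p => -p.1 - p.2 ∈ Z)

lemma tri_st {A X Y Z Z' : Finset ℝ} (hA0 : (0 : ℝ) ∉ A)
    (hZ : ∀ q ∈ A, ∀ z ∈ Z, q * z ∈ Z') (hZ0 : (0 : ℝ) ∉ Z') :
    (A.card * (tri X Y Z).card < 2 * (Z'.card * Y.card)) ∨
      ((A.card : ℝ) * (tri X Y Z).card) ^ 3 ≤
        512 * (A.card : ℝ) ^ 2 * (X.card : ℝ) ^ 2 * ((Z'.card : ℝ) * Y.card) ^ 2 := by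
  classical
  set L : Finset (ℝ × ℝ) := (Z' ×ˢ Y).image (fun p => (-p.1, -p.2)) with hL
  have hLc : L.card = Z'.card * Y.card := by
    rw [hL, Finset.card_image_of_injective, Finset.card_product]
    rintro ⟨a, b⟩ ⟨a', b'⟩ h
    simpa using h
  have hL0 : ∀ l ∈ L, l.1 ≠ 0 := by
    intro l hl
    obtain ⟨⟨a, b⟩, hp, rfl⟩ := Finset.mem_image.1 hl
    rw [Finset.mem_product] at hp
    have : a ≠ 0 := fun h => hZ0 (h ▸ hp.1)
    simpa using this
  set X' : Finset ℝ := A.image (fun q => q⁻¹) with hX'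
  have hXc : X'.card = A.card := Finset.card_image_of_injective _ inv_injective
  have hI : A.card * (tri X Y Z).card ≤ (inc L X' X).card := by
    rw [← Finset.card_product]
    apply Finset.card_le_card_of_injOn
      (fun p => ((-(p.1 * (-p.2.1 - p.2.2)), -p.2.2), p.1⁻¹))
    · rintro ⟨q, ⟨x, y⟩⟩ hp
      simp only [Finset.coe_product, Set.mem_prod, Finset.mem_coe, tri,
        Finset.mem_filter, Finset.mem_product] at hp
      obtain ⟨hq, ⟨hx, hy⟩, hz⟩ := hp
      have hq0 : q ≠ 0 := fun h => hA0 (h ▸ hq)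
      simp only [inc, Finset.coe_filter, Set.mem_ofPred_eq, Finset.mem_product]
      refine ⟨⟨?_, Finset.mem_image_of_mem _ hq⟩, ?_⟩
      · rw [hL]
        exact Finset.mem_image.2 ⟨(q * (-x - y), y), Finset.mem_product.2 ⟨hZ q hq _ hz, hy⟩, rfl⟩
      · have : -(q * (-x - y)) * q⁻¹ + -y = x := by field_simp; ring
        rw [this]; exact hx
    · rintro ⟨q, ⟨x, y⟩⟩ hp ⟨q', ⟨x', y'⟩⟩ hp' h
      simp only [Finset.coe_product, Set.mem_prod, Finset.mem_coe] at hp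
      have hq0 : q ≠ 0 := fun h => hA0 (h ▸ hp.1)
      simp only [Prod.mk.injEq, inv_inj, neg_inj] at h
      obtain ⟨⟨h3, rfl⟩, rfl⟩ := h
      have := mul_left_cancel₀ hq0 h3
      have : x = x' := by linarith
      subst this
      rfl
  have hI' : (A.card : ℝ) * (tri X Y Z).card ≤ ((inc L X' X).card : ℝ) := by exact_mod_cast hI
  rcases st_grid L X' X hL0 with h | h
  · left
    rw [hLc] at h
    omega
  · right
    rw [hLc, hXc] at h
    push_cast at h
    exact le_trans (by gcongr) h

/-- real harmonic numbers -/
noncomputable def Hr (n : ℕ) : ℝ := ∑ t ∈ Finset.Icc 1 n, (1 : ℝ) / t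

lemma cube_le_sum (k : ℕ) (hk : 2 ≤ k) :
    (k : ℝ) ^ 3 ≤ 4 * ∑ t ∈ Finset.Icc 2 k, (t : ℝ) ^ 2 := by
  induction k, hk using Nat.le_induction with
  | base => norm_num
  | succ k hk ih =>
    rw [Finset.sum_Icc_succ_top (by omega)]
    push_cast
    nlinarith [(Nat.cast_nonneg k : (0 : ℝ) ≤ k)]

/-- points of `B × B` on a line -/
noncomputable def kk (B : Finset ℝ) (l : ℝ × ℝ) : Finset ℝ := B.filter (fun b => l.1 * b + l.2 ∈ B)

lemma rich_lines (B : Finset ℝ) (L : Finset (ℝ × ℝ)) (hL : ∀ l ∈ L, l.1 ≠ 0) {t : ℕ} (ht : 2 ≤ t)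
    (hr : ∀ l ∈ L, t ≤ (kk B l).card) :
    (t : ℝ) ^ 3 * L.card ≤ 512 * (B.card : ℝ) ^ 4 := by
  by_cases h0 : L.card = 0
  · rw [h0]; simp
  have hLp : 0 < (L.card : ℝ) := by exact_mod_cast Nat.pos_of_ne_zero h0
  have hI : t * L.card ≤ (inc L B B).card := by
    rw [inc_card, mul_comm, ← smul_eq_mul, ← Finset.sum_const]
    exact Finset.sum_le_sum hr
  rcases st_grid L B B hL with h | h
  · exfalso
    nlinarith
  · have hI' : (t : ℝ) * L.card ≤ (inc L B B).card := by exact_mod_cast hI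
    have h1 : ((t : ℝ) ^ 3 * L.card) * (L.card : ℝ) ^ 2 ≤
        (512 * (B.card : ℝ) ^ 4) * (L.card : ℝ) ^ 2 := by
      calc _ = ((t : ℝ) * L.card) ^ 3 := by ring
        _ ≤ ((inc L B B).card : ℝ) ^ 3 := by gcongr
        _ ≤ _ := h
        _ = _ := by ring
    exact le_of_mul_le_mul_right h1 (by positivity)

lemma triples_bound (B : Finset ℝ) (L : Finset (ℝ × ℝ)) (hL : ∀ l ∈ L, l.1 ≠ 0)
    (hr : ∀ l ∈ L, 2 ≤ (kk B l).card) :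
    ∑ l ∈ L, ((kk B l).card : ℝ) ^ 3 ≤ 2048 * (B.card : ℝ) ^ 4 * Hr B.card := by
  classical
  have h1 : ∀ l ∈ L, ((kk B l).card : ℝ) ^ 3 ≤
      4 * ∑ t ∈ Finset.Icc 2 B.card, if t ≤ (kk B l).card then (t : ℝ) ^ 2 else 0 := by
    intro l hl
    refine (cube_le_sum _ (hr l hl)).trans ?_
    rw [← Finset.sum_filter]
    gcongr
    intro t ht
    simp only [Finset.mem_filter, Finset.mem_Icc] at ht ⊢
    have : (kk B l).card ≤ B.card := Finset.card_filter_le _ _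
    omega
  calc ∑ l ∈ L, ((kk B l).card : ℝ) ^ 3
      ≤ ∑ l ∈ L, 4 * ∑ t ∈ Finset.Icc 2 B.card,
          (if t ≤ (kk B l).card then (t : ℝ) ^ 2 else 0) := Finset.sum_le_sum h1
    _ = 4 * ∑ t ∈ Finset.Icc 2 B.card, (t : ℝ) ^ 2 *
          (L.filter (fun l => t ≤ (kk B l).card)).card := by
        rw [← Finset.mul_sum, Finset.sum_comm]
        congr 1
        apply Finset.sum_congr rfl
        intro t _
        rw [← Finset.sum_filter, Finset.sum_const, nsmul_eq_mul, mul_comm]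
    _ ≤ 4 * ∑ t ∈ Finset.Icc 2 B.card, 512 * (B.card : ℝ) ^ 4 * (1 / t) := by
        refine mul_le_mul_of_nonneg_left (Finset.sum_le_sum fun t ht => ?_) (by norm_num)
        rw [Finset.mem_Icc] at ht
        have := rich_lines B (L.filter (fun l => t ≤ (kk B l).card))
          (fun l hl => hL l (Finset.mem_filter.1 hl).1) ht.1
          (fun l hl => (Finset.mem_filter.1 hl).2)
        have htp : (0 : ℝ) < t := by
          have : 0 < t := by omega
          exact_mod_cast this
        rw [mul_one_div, le_div_iff₀ htp]
        calc _ = (t : ℝ) ^ 3 * (L.filter (fun l => t ≤ (kk B l).card)).card := by ring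
          _ ≤ _ := this
    _ = 2048 * (B.card : ℝ) ^ 4 * ∑ t ∈ Finset.Icc 2 B.card, (1 : ℝ) / t := by
        rw [← Finset.mul_sum]; ring
    _ ≤ _ := by
        unfold Hr
        gcongr
        norm_num

lemma cs_fibers {α β : Type*} [DecidableEq α] [DecidableEq β] (Ω : Finset α) (Q : Finset β)
    (φ : α → β) (h : ∀ w ∈ Ω, φ w ∈ Q) :
    Ω.card ^ 2 ≤ Q.card * ((Ω ×ˢ Ω).filter (fun p => φ p.1 = φ p.2)).card := by
  have h1 : Ω.card = ∑ y ∈ Q, (Ω.filter (fun w => φ w = y)).card :=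
    Finset.card_eq_sum_card_fiberwise h
  have h2 : ((Ω ×ˢ Ω).filter (fun p => φ p.1 = φ p.2)).card =
      ∑ y ∈ Q, (Ω.filter (fun w => φ w = y)).card ^ 2 := by
    rw [Finset.card_eq_sum_card_fiberwise (f := fun p => φ p.1) (t := Q)]
    · apply Finset.sum_congr rfl
      intro y _
      rw [sq, ← Finset.card_product]
      congr 1
      ext ⟨a, b⟩
      simp only [Finset.mem_filter, Finset.mem_product]
      constructor
      · rintro ⟨⟨⟨ha, hb⟩, hab⟩, hy⟩
        exact ⟨⟨ha, hy⟩, hb, by rw [← hab, hy]⟩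
      · rintro ⟨⟨ha, hy⟩, hb, hy'⟩
        exact ⟨⟨⟨ha, hb⟩, by rw [hy, hy']⟩, hy⟩
    · intro p hp
      simp only [Finset.coe_filter, Finset.mem_product, Set.mem_ofPred_eq] at hp
      exact h _ hp.1.1
  rw [h2]
  conv_lhs => rw [h1]
  exact sq_sum_le_card_mul_sum_sq

/-- cyclic triples with popular differences -/
noncomputable def cyc (B X Y Z : Finset ℝ) : Finset (ℝ × ℝ × ℝ) :=
  (B ×ˢ B ×ˢ B).filter (fun p => p.1 - p.2.1 ∈ X ∧ p.2.1 - p.2.2 ∈ Y ∧ p.2.2 - p.1 ∈ Z)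

lemma collisions (A B X Y Z : Finset ℝ) (hA0 : (0 : ℝ) ∉ A) (hX0 : (0 : ℝ) ∉ X) :
    ((((A ×ˢ cyc B X Y Z) ×ˢ (A ×ˢ cyc B X Y Z)).filter (fun p =>
      ((p.1.1 * (p.1.2.1 - p.1.2.2.1), p.1.1 * (p.1.2.2.1 - p.1.2.2.2)) : ℝ × ℝ) =
      (p.2.1 * (p.2.2.1 - p.2.2.2.1), p.2.1 * (p.2.2.2.1 - p.2.2.2.2)))).card : ℝ) ≤
      A.card * (2048 * (B.card : ℝ) ^ 4 * Hr B.card) := by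
  classical
  set L : Finset (ℝ × ℝ) := ((A ×ˢ A ×ˢ B ×ˢ B).image
    (fun p => (p.1 / p.2.1, p.2.2.2 - p.1 / p.2.1 * p.2.2.1))).filter
      (fun l => 2 ≤ (kk B l).card) with hL
  have hL0 : ∀ l ∈ L, l.1 ≠ 0 := by
    intro l hl
    rw [hL, Finset.mem_filter] at hl
    obtain ⟨⟨q, s, b, c⟩, hp, rfl⟩ := Finset.mem_image.1 hl.1
    simp only [Finset.mem_product] at hp
    have hq : q ≠ 0 := fun h => hA0 (h ▸ hp.1)
    have hs : s ≠ 0 := fun h => hA0 (h ▸ hp.2.1)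
    exact div_ne_zero hq hs
  have hT := triples_bound B L hL0 (fun l hl => (Finset.mem_filter.1 hl).2)
  refine le_trans ?_ (mul_le_mul_of_nonneg_left hT (Nat.cast_nonneg _))
  have hc : A.card * ∑ l ∈ L, (kk B l).card ^ 3 =
      (A ×ˢ (L.sigma (fun l => kk B l ×ˢ kk B l ×ˢ kk B l))).card := by
    rw [Finset.card_product, Finset.card_sigma]
    congr 1
    apply Finset.sum_congr rfl
    intro l _
    rw [Finset.card_product, Finset.card_product]; ring
  have hgoal : (((A ×ˢ cyc B X Y Z) ×ˢ (A ×ˢ cyc B X Y Z)).filter (fun p =>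
      ((p.1.1 * (p.1.2.1 - p.1.2.2.1), p.1.1 * (p.1.2.2.1 - p.1.2.2.2)) : ℝ × ℝ) =
      (p.2.1 * (p.2.2.1 - p.2.2.2.1), p.2.1 * (p.2.2.2.1 - p.2.2.2.2)))).card ≤
      A.card * ∑ l ∈ L, (kk B l).card ^ 3 := by
    rw [hc]
    apply Finset.card_le_card_of_injOn (fun p =>
      (p.2.1, ⟨(p.1.1 / p.2.1, p.2.2.1 - p.1.1 / p.2.1 * p.1.2.1), p.1.2⟩))
    · rintro ⟨⟨q, b, b', b''⟩, ⟨s, c, c', c''⟩⟩ hp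
      simp only [Finset.coe_filter, Finset.mem_product, Set.mem_ofPred_eq, cyc,
        Finset.mem_filter, Prod.mk.injEq] at hp
      obtain ⟨⟨⟨hq, ⟨hb, hb', hb''⟩, hX, hY, hZ⟩, ⟨hs, ⟨hc, hc', hc''⟩, _⟩⟩, e1, e2⟩ := hp
      have hs0 : s ≠ 0 := fun h => hA0 (h ▸ hs)
      have k1 : q / s * b + (c - q / s * b) = c := by ring
      have k2 : q / s * b' + (c - q / s * b) = c' := by
        field_simp; linarith
      have k3 : q / s * b'' + (c - q / s * b) = c'' := by
        field_simp; linarith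
      have m1 : b ∈ kk B (q / s, c - q / s * b) := by
        simp only [kk, Finset.mem_filter]; rw [k1]; exact ⟨hb, hc⟩
      have m2 : b' ∈ kk B (q / s, c - q / s * b) := by
        simp only [kk, Finset.mem_filter]; rw [k2]; exact ⟨hb', hc'⟩
      have m3 : b'' ∈ kk B (q / s, c - q / s * b) := by
        simp only [kk, Finset.mem_filter]; rw [k3]; exact ⟨hb'', hc''⟩
      have hne : b ≠ b' := by
        rintro rfl
        rw [sub_self] at hX
        exact hX0 hX
      have hcard : 2 ≤ (kk B (q / s, c - q / s * b)).card := by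
        have : 1 < (kk B (q / s, c - q / s * b)).card :=
          Finset.one_lt_card.2 ⟨b, m1, b', m2, hne⟩
        omega
      simp only [Finset.coe_product, Set.mem_prod, Finset.mem_coe, Finset.mem_sigma,
        Finset.mem_product]
      refine ⟨hs, ?_, m1, m2, m3⟩
      rw [hL, Finset.mem_filter]
      refine ⟨Finset.mem_image.2 ⟨(q, s, b, c), ?_, rfl⟩, hcard⟩
      simp only [Finset.mem_product]
      exact ⟨hq, hs, hb, hc⟩
    · rintro ⟨⟨q, b, b', b''⟩, ⟨s, c, c', c''⟩⟩ hp ⟨⟨q1, b1, b1', b1''⟩, ⟨s1, c1, c1', c1''⟩⟩ hp1 h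
      simp only [Finset.coe_filter, Finset.mem_product, Set.mem_ofPred_eq, cyc,
        Finset.mem_filter, Prod.mk.injEq] at hp hp1
      obtain ⟨⟨⟨hq, ⟨hb, hb', hb''⟩, hX, hY, hZ⟩, ⟨hs, ⟨hc, hc', hc''⟩, _⟩⟩, e1, e2⟩ := hp
      obtain ⟨_, e3, e4⟩ := hp1
      have hs0 : s ≠ 0 := fun h => hA0 (h ▸ hs)
      simp only [Prod.mk.injEq, Sigma.mk.injEq, heq_eq_eq] at h
      obtain ⟨rfl, ⟨h1, h2⟩, rfl, rfl, rfl⟩ := h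
      have hq' : q = q1 := by
        field_simp at h1; exact h1
      subst hq'
      have hc1 : c = c1 := by linarith
      subst hc1
      have hc2 : c' = c1' := by
        have : s * (c - c') = s * (c - c1') := by linarith
        have := mul_left_cancel₀ hs0 this
        linarith
      subst hc2
      have hc3 : c'' = c1'' := by
        have : s * (c' - c'') = s * (c' - c1'') := by linarith
        have := mul_left_cancel₀ hs0 this
        linarith
      subst hc3
      rfl
  exact_mod_cast hgoal

lemma cyc_bound {A B : Finset ℝ} (hA0 : (0 : ℝ) ∉ A) (hA : A.Nonempty) {t1 t2 t3 : ℕ}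
    (h1 : 1 ≤ t1) (h2 : 1 ≤ t2) (h3 : 1 ≤ t3) :
    (A.card : ℝ) * ((cyc B (pop A t1) (pop A t2) (pop A t3)).card : ℝ) ^ 2 ≤
      (tri (pop (A * A) t1) (pop (A * A) t2) (pop (A * A) t3)).card *
        (2048 * (B.card : ℝ) ^ 4 * Hr B.card) := by
  classical
  set N := cyc B (pop A t1) (pop A t2) (pop A t3) with hN
  have hcs := cs_fibers (A ×ˢ N) (tri (pop (A * A) t1) (pop (A * A) t2) (pop (A * A) t3))
    (fun p => ((p.1 * (p.2.1 - p.2.2.1), p.1 * (p.2.2.1 - p.2.2.2)) : ℝ × ℝ)) (by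
      rintro ⟨q, b, b', b''⟩ hp
      simp only [hN, cyc, Finset.mem_product, Finset.mem_filter] at hp
      obtain ⟨hq, _, hX, hY, hZ⟩ := hp
      have hq0 : q ≠ 0 := fun h => hA0 (h ▸ hq)
      simp only [tri, Finset.mem_filter, Finset.mem_product]
      refine ⟨⟨pop_dil hq hq0 h1 hX, pop_dil hq hq0 h2 hY⟩, ?_⟩
      have : -(q * (b - b')) - q * (b' - b'') = q * (b'' - b) := by ring
      rw [this]
      exact pop_dil hq hq0 h3 hZ)
  have hX0 : (0 : ℝ) ∉ pop A t1 := fun h => ((mem_pop h1).1 h).1 rfl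
  have hcol := collisions A B (pop A t1) (pop A t2) (pop A t3) hA0 hX0
  rw [← hN] at hcol
  rw [Finset.card_product] at hcs
  have hcs' : ((A.card : ℝ) * N.card) ^ 2 ≤
      (tri (pop (A * A) t1) (pop (A * A) t2) (pop (A * A) t3)).card *
      (A.card * (2048 * (B.card : ℝ) ^ 4 * Hr B.card)) := by
    refine le_trans (by exact_mod_cast hcs) (mul_le_mul_of_nonneg_left hcol (Nat.cast_nonneg _))
  have hn : 0 < (A.card : ℝ) := by exact_mod_cast hA.card_pos
  have h5 : (A.card : ℝ) * ((A.card : ℝ) * (N.card : ℝ) ^ 2) ≤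
      A.card * ((tri (pop (A * A) t1) (pop (A * A) t2) (pop (A * A) t3)).card *
        (2048 * (B.card : ℝ) ^ 4 * Hr B.card)) := by
    calc _ = ((A.card : ℝ) * N.card) ^ 2 := by ring
      _ ≤ _ := hcs'
      _ = _ := by ring
  exact le_of_mul_le_mul_left h5 hn

lemma psd_tri {ι κ : Type*} [DecidableEq ι] (B : Finset ι) (Z : Finset κ) (V : ι → κ → ℝ)
    (T T0 : ι → ι → ℝ) (n : ℝ) (hn : 0 ≤ n)
    (hT : ∀ b ∈ B, ∀ b' ∈ B, T b b' = ∑ z ∈ Z, V b z * V b' z)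
    (hT0 : ∀ b ∈ B, ∀ b' ∈ B, T b b' = T0 b b' + if b = b' then n else 0)
    (hpos : ∀ b ∈ B, ∀ b' ∈ B, 0 ≤ T0 b b')
    (hsym : ∀ b ∈ B, ∀ b' ∈ B, T0 b b' = T0 b' b) :
    (∑ b ∈ B, ∑ b' ∈ B, T0 b b') ^ 4 ≤ (B.card : ℝ) ^ 3 * (∑ b ∈ B, ∑ b' ∈ B, T b b') *
      ((∑ b ∈ B, ∑ b' ∈ B, ∑ b'' ∈ B, T0 b b' * T0 b' b'' * T0 b'' b) +
        n * ∑ b ∈ B, ∑ b' ∈ B, T0 b b' ^ 2) := by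
  set W := (∑ b ∈ B, ∑ b' ∈ B, ∑ b'' ∈ B, T0 b b' * T0 b' b'' * T0 b'' b) +
        n * ∑ b ∈ B, ∑ b' ∈ B, T0 b b' ^ 2 with hW
  set E := ∑ b ∈ B, ∑ b' ∈ B, T b b' with hE
  set E0 := ∑ b ∈ B, ∑ b' ∈ B, T0 b b' with hE0
  set g : ι → κ → ℝ := fun b z => ∑ b' ∈ B, T0 b b' * V b' z with hg
  set w : ι → ℝ := fun b' => ∑ b ∈ B, T0 b b' with hw
  set U : κ → ℝ := fun z => ∑ b ∈ B, V b z with hU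
  have hWg : W = ∑ z ∈ Z, ∑ b ∈ B, g b z ^ 2 := by
    have e1 : ∀ b ∈ B, ∑ z ∈ Z, g b z ^ 2 =
        ∑ b' ∈ B, ∑ b'' ∈ B, T0 b b' * T b' b'' * T0 b'' b := by
      intro b hb
      simp only [hg, sq, Finset.sum_mul_sum]
      rw [Finset.sum_comm]
      apply Finset.sum_congr rfl
      intro b' hb'
      rw [Finset.sum_comm]
      apply Finset.sum_congr rfl
      intro b'' hb''
      rw [hT b' hb' b'' hb'', hsym b'' hb'' b hb, Finset.mul_sum, Finset.sum_mul]
      apply Finset.sum_congr rfl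
      intro z _
      ring
    have e2 : ∀ b ∈ B, ∑ b' ∈ B, ∑ b'' ∈ B, T0 b b' * T b' b'' * T0 b'' b =
        (∑ b' ∈ B, ∑ b'' ∈ B, T0 b b' * T0 b' b'' * T0 b'' b) + n * ∑ b' ∈ B, T0 b b' ^ 2 := by
      intro b hb
      rw [Finset.mul_sum, ← Finset.sum_add_distrib]
      apply Finset.sum_congr rfl
      intro b' hb'
      have : ∀ b'' ∈ B, T0 b b' * T b' b'' * T0 b'' b = T0 b b' * T0 b' b'' * T0 b'' b +
          if b' = b'' then T0 b b' * n * T0 b'' b else 0 := by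
        intro b'' hb''
        rw [hT0 b' hb' b'' hb'']
        split_ifs <;> ring
      rw [Finset.sum_congr rfl this, Finset.sum_add_distrib, Finset.sum_ite_eq]
      rw [if_pos hb', hsym b' hb' b hb]
      ring
    rw [Finset.sum_comm, Finset.sum_congr rfl e1, Finset.sum_congr rfl e2,
      Finset.sum_add_distrib, hW, Finset.mul_sum]
  have hEU : E = ∑ z ∈ Z, U z ^ 2 := by
    simp only [hU, sq, Finset.sum_mul_sum]
    rw [Finset.sum_comm, hE]
    apply Finset.sum_congr rfl
    intro b hb
    rw [Finset.sum_comm]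
    apply Finset.sum_congr rfl
    intro b' hb'
    rw [hT b hb b' hb']
  set G : κ → ℝ := fun z => ∑ b ∈ B, g b z with hG
  have hGW : ∑ z ∈ Z, G z ^ 2 ≤ B.card * W := by
    rw [hWg, Finset.mul_sum]
    apply Finset.sum_le_sum
    intro z _
    exact sq_sum_le_card_mul_sum_sq
  have hGU : ∑ z ∈ Z, G z * U z = ∑ b ∈ B, ∑ b' ∈ B, w b * T b b' := by
    have e1 : ∀ z, G z = ∑ b ∈ B, w b * V b z := by
      intro z
      simp only [hG, hg, hw]
      rw [Finset.sum_comm]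
      apply Finset.sum_congr rfl
      intro b _
      rw [Finset.sum_mul]
    simp only [e1, hU, Finset.sum_mul_sum]
    rw [Finset.sum_comm]
    apply Finset.sum_congr rfl
    intro b hb
    rw [Finset.sum_comm]
    apply Finset.sum_congr rfl
    intro b' hb'
    rw [hT b hb b' hb', Finset.mul_sum]
    apply Finset.sum_congr rfl
    intro z _
    ring
  have hw0 : ∀ b ∈ B, 0 ≤ w b := fun b hb => Finset.sum_nonneg fun b' hb' => hpos b' hb' b hb
  have hGU2 : ∑ b ∈ B, w b ^ 2 ≤ ∑ z ∈ Z, G z * U z := by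
    rw [hGU]
    apply Finset.sum_le_sum
    intro b hb
    rw [← Finset.mul_sum, sq]
    apply mul_le_mul_of_nonneg_left _ (hw0 b hb)
    simp only [hw]
    apply Finset.sum_le_sum
    intro b' hb'
    rw [hT0 b hb b' hb', hsym b hb b' hb']
    split_ifs <;> linarith
  have hEw : E0 ^ 2 ≤ B.card * ∑ b ∈ B, w b ^ 2 := by
    have : E0 = ∑ b ∈ B, w b := by rw [hE0, Finset.sum_comm]
    rw [this]
    exact sq_sum_le_card_mul_sum_sq
  have hCS : (∑ z ∈ Z, G z * U z) ^ 2 ≤ (∑ z ∈ Z, G z ^ 2) * ∑ z ∈ Z, U z ^ 2 :=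
    Finset.sum_mul_sq_le_sq_mul_sq _ _ _
  have hE_nn : 0 ≤ E := by rw [hEU]; exact Finset.sum_nonneg fun z _ => sq_nonneg _
  have hm : (0 : ℝ) ≤ B.card := Nat.cast_nonneg _
  calc E0 ^ 4 = (E0 ^ 2) ^ 2 := by ring
    _ ≤ (B.card * ∑ z ∈ Z, G z * U z) ^ 2 := by
        apply pow_le_pow_left₀ (sq_nonneg _)
        exact hEw.trans (mul_le_mul_of_nonneg_left hGU2 hm)
    _ = (B.card : ℝ) ^ 2 * (∑ z ∈ Z, G z * U z) ^ 2 := by ring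
    _ ≤ (B.card : ℝ) ^ 2 * ((B.card * W) * E) := by
        apply mul_le_mul_of_nonneg_left _ (by positivity)
        rw [hEU]
        refine hCS.trans (mul_le_mul_of_nonneg_right hGW ?_)
        rw [← hEU]; exact hE_nn
    _ = _ := by ring

lemma addE_eq (A B : Finset ℝ) : addE A B = ∑ b ∈ B, ∑ b' ∈ B, rep A (b - b') := by
  classical
  have h1 : {x : ℝ × ℝ × ℝ × ℝ |
    x.1 ∈ A ∧ x.2.1 ∈ A ∧ x.2.2.1 ∈ B ∧ x.2.2.2 ∈ B ∧ x.1 - x.2.2.1 = x.2.1 - x.2.2.2} =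
    (((B ×ˢ B).sigma (fun p => A.filter (fun a => a - (p.1 - p.2) ∈ A))).image
      (fun q => (q.2, q.2 - (q.1.1 - q.1.2), q.1.1, q.1.2)) : Finset (ℝ × ℝ × ℝ × ℝ)) := by
    ext ⟨a, a', b, b'⟩
    simp only [Set.mem_ofPred_eq, Finset.coe_image, Set.mem_image, Finset.mem_coe,
      Finset.mem_sigma, Finset.mem_product, Finset.mem_filter, Prod.mk.injEq]
    constructor
    · rintro ⟨ha, ha', hb, hb', h⟩
      have : a - (b - b') = a' := by linarith
      exact ⟨⟨(b, b'), a⟩, ⟨⟨hb, hb'⟩, ha, by rw [this]; exact ha'⟩, rfl, this, rfl, rfl⟩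
    · rintro ⟨⟨⟨c, c'⟩, d⟩, ⟨⟨hb, hb'⟩, ha, ha'⟩, rfl, rfl, rfl, rfl⟩
      exact ⟨ha, ha', hb, hb', by simp only []; ring⟩
  rw [addE, h1, Set.ncard_coe_finset, Finset.card_image_of_injective, Finset.card_sigma,
    Finset.sum_product]
  · rfl
  · rintro ⟨⟨b, b'⟩, a⟩ ⟨⟨c, c'⟩, d⟩ h
    simp only [Prod.mk.injEq] at h
    obtain ⟨rfl, _, rfl, rfl⟩ := h
    rfl

lemma rep_eq_sum (A B : Finset ℝ) {b b' : ℝ} (hb : b ∈ B) :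
    (rep A (b - b') : ℝ) = ∑ z ∈ A - B,
      (if z + b ∈ A then (1 : ℝ) else 0) * (if z + b' ∈ A then (1 : ℝ) else 0) := by
  classical
  have : rep A (b - b') = ((A - B).filter (fun z => z + b ∈ A ∧ z + b' ∈ A)).card := by
    apply Finset.card_bij (fun a _ => a - b)
    · intro a ha
      simp only [Finset.mem_filter] at ha ⊢
      refine ⟨Finset.sub_mem_sub ha.1 hb, by simpa using ha.1, ?_⟩
      have : a - b + b' = a - (b - b') := by ring
      rw [this]; exact ha.2
    · intro a _ a' _ h
      linarith
    · intro z hz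
      simp only [Finset.mem_filter] at hz
      refine ⟨z + b, ?_, by ring⟩
      simp only [Finset.mem_filter]
      refine ⟨hz.2.1, ?_⟩
      have : z + b - (b - b') = z + b' := by ring
      rw [this]; exact hz.2.2
  rw [this, Finset.card_filter]
  push_cast
  apply Finset.sum_congr rfl
  intro z _
  by_cases h1 : z + b ∈ A <;> by_cases h2 : z + b' ∈ A <;> simp [h1, h2]

/-- off-diagonal representation count -/
noncomputable def T0f (A : Finset ℝ) (b b' : ℝ) : ℝ := if b = b' then 0 else (rep A (b - b') : ℝ)

lemma T0f_layer (A : Finset ℝ) (b b' : ℝ) :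
    T0f A b b' = ∑ t ∈ Finset.Icc 1 A.card, if b - b' ∈ pop A t then (1 : ℝ) else 0 := by
  classical
  unfold T0f
  split_ifs with h
  · symm
    apply Finset.sum_eq_zero
    intro t ht
    rw [if_neg]
    intro h'
    rw [mem_pop (Finset.mem_Icc.1 ht).1] at h'
    exact h'.1 (by rw [h, sub_self])
  · have : ∀ t ∈ Finset.Icc 1 A.card, (if b - b' ∈ pop A t then (1 : ℝ) else 0) =
        if t ≤ rep A (b - b') then 1 else 0 := by
      intro t ht
      have h1 : b - b' ∈ pop A t ↔ t ≤ rep A (b - b') := by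
        rw [mem_pop (Finset.mem_Icc.1 ht).1]
        exact ⟨fun h => h.2, fun h' => ⟨sub_ne_zero.2 h, h'⟩⟩
      simp only [h1]
    rw [Finset.sum_congr rfl this, ← Finset.sum_filter]
    have h2 : (Finset.Icc 1 A.card).filter (fun t => t ≤ rep A (b - b')) =
        Finset.Icc 1 (rep A (b - b')) := by
      ext t
      simp only [Finset.mem_filter, Finset.mem_Icc]
      have := rep_le A (b - b')
      omega
    rw [h2]
    simp

lemma rep_neg (A : Finset ℝ) (x : ℝ) : rep A (-x) = rep A x := by
  apply Finset.card_bij (fun a _ => a + x)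
  · intro a ha
    simp only [Finset.mem_filter, sub_neg_eq_add] at ha ⊢
    exact ⟨ha.2, by simpa using ha.1⟩
  · intro a _ b _ h
    simpa using h
  · intro a ha
    simp only [Finset.mem_filter] at ha
    exact ⟨a - x, by simp [ha.1, ha.2], by ring⟩

lemma T0f_symm (A : Finset ℝ) (b b' : ℝ) : T0f A b b' = T0f A b' b := by
  unfold T0f
  by_cases h : b = b'
  · simp [h]
  · rw [if_neg h, if_neg (Ne.symm h), ← rep_neg, neg_sub]

lemma T0f_nonneg (A : Finset ℝ) (b b' : ℝ) : 0 ≤ T0f A b b' := by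
  unfold T0f
  split_ifs <;> positivity

lemma cyc_rot (B X Y Z : Finset ℝ) : (cyc B X Y Z).card = (cyc B Y Z X).card := by
  apply Finset.card_bij (fun p _ => (p.2.1, p.2.2, p.1))
  · rintro ⟨a, b, c⟩ h
    simp only [cyc, Finset.mem_filter, Finset.mem_product] at h ⊢
    tauto
  · rintro ⟨a, b, c⟩ _ ⟨a', b', c'⟩ _ h
    simp only [Prod.mk.injEq] at h ⊢
    tauto
  · rintro ⟨a, b, c⟩ h
    refine ⟨(c, a, b), ?_, rfl⟩
    simp only [cyc, Finset.mem_filter, Finset.mem_product] at h ⊢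
    tauto

lemma tri_sum (A B : Finset ℝ) :
    ∑ b ∈ B, ∑ b' ∈ B, ∑ b'' ∈ B, T0f A b b' * T0f A b' b'' * T0f A b'' b =
    ∑ t1 ∈ Finset.Icc 1 A.card, ∑ t2 ∈ Finset.Icc 1 A.card, ∑ t3 ∈ Finset.Icc 1 A.card,
      ((cyc B (pop A t1) (pop A t2) (pop A t3)).card : ℝ) := by
  classical
  have h1 : ∀ t1 t2 t3, ((cyc B (pop A t1) (pop A t2) (pop A t3)).card : ℝ) =
      ∑ p ∈ B ×ˢ B ×ˢ B, (if p.1 - p.2.1 ∈ pop A t1 then (1 : ℝ) else 0) *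
        (if p.2.1 - p.2.2 ∈ pop A t2 then (1 : ℝ) else 0) *
        (if p.2.2 - p.1 ∈ pop A t3 then (1 : ℝ) else 0) := by
    intro t1 t2 t3
    rw [cyc, Finset.card_filter]
    push_cast
    apply Finset.sum_congr rfl
    intro p _
    by_cases h1 : p.1 - p.2.1 ∈ pop A t1 <;> by_cases h2 : p.2.1 - p.2.2 ∈ pop A t2 <;>
      by_cases h3 : p.2.2 - p.1 ∈ pop A t3 <;> simp [h1, h2, h3]
  have h2 : ∑ b ∈ B, ∑ b' ∈ B, ∑ b'' ∈ B, T0f A b b' * T0f A b' b'' * T0f A b'' b =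
      ∑ p ∈ B ×ˢ B ×ˢ B, T0f A p.1 p.2.1 * T0f A p.2.1 p.2.2 * T0f A p.2.2 p.1 := by
    rw [Finset.sum_product]
    apply Finset.sum_congr rfl
    intro b _
    rw [Finset.sum_product]
  rw [h2]
  simp only [h1]
  have h3 : ∀ p ∈ B ×ˢ B ×ˢ B, T0f A p.1 p.2.1 * T0f A p.2.1 p.2.2 * T0f A p.2.2 p.1 =
      ∑ t1 ∈ Finset.Icc 1 A.card, ∑ t2 ∈ Finset.Icc 1 A.card, ∑ t3 ∈ Finset.Icc 1 A.card,
       (if p.1 - p.2.1 ∈ pop A t1 then (1 : ℝ) else 0) *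
        (if p.2.1 - p.2.2 ∈ pop A t2 then (1 : ℝ) else 0) *
        (if p.2.2 - p.1 ∈ pop A t3 then (1 : ℝ) else 0) := by
    intro p _
    simp only [T0f_layer]
    rw [Finset.sum_mul_sum, Finset.sum_mul]
    apply Finset.sum_congr rfl
    intro t1 _
    rw [Finset.sum_mul_sum]
  rw [Finset.sum_congr rfl h3, Finset.sum_comm]
  apply Finset.sum_congr rfl
  intro t1 _
  rw [Finset.sum_comm]
  apply Finset.sum_congr rfl
  intro t2 _
  rw [Finset.sum_comm]

lemma q_alg {n L Q x y z t1 t2 t3 : ℝ} (hn : 1 ≤ n) (hL : 1 ≤ L) (hQ : 0 ≤ Q)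
    (hx : 0 ≤ x) (hy : 0 ≤ y) (hz : 0 ≤ z) (h1 : 1 ≤ t1) (h12 : t1 ≤ t2) (h13 : t1 ≤ t3)
    (hx1 : t1 ^ 3 * x ≤ L * n ^ 3) (hy1 : t2 ^ 3 * y ≤ L * n ^ 3) (hz1 : t3 ^ 3 * z ≤ L * n ^ 3)
    (h : n * Q ≤ 2 * (z * y) ∨ (n * Q) ^ 3 ≤ 512 * n ^ 2 * x ^ 2 * (z * y) ^ 2) :
    (t1 * t2 * t3) ^ 6 * Q ^ 3 ≤ 512 * L ^ 6 * n ^ 17 := by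
  have ht2 : 0 < t2 := by linarith
  have ht3 : 0 < t3 := by linarith
  have ht1 : 0 < t1 := by linarith
  have hn0 : 0 < n := by linarith
  have hL0 : 0 < L := by linarith
  have hzy : (t3 ^ 3 * z) * (t2 ^ 3 * y) ≤ (L * n ^ 3) * (L * n ^ 3) :=
    mul_le_mul hz1 hy1 (by positivity) (by positivity)
  rcases h with h | h
  · have hsq : t1 ^ 2 ≤ t2 * t3 := by rw [sq]; exact mul_le_mul h12 h13 ht1.le ht2.le
    have e1 : n * ((t1 * t2 * t3) ^ 2 * Q) ≤ n * (2 * L ^ 2 * n ^ 5) := by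
      calc n * ((t1 * t2 * t3) ^ 2 * Q) = t1 ^ 2 * (t2 ^ 2 * t3 ^ 2) * (n * Q) := by ring
        _ ≤ (t2 * t3) * (t2 ^ 2 * t3 ^ 2) * (2 * (z * y)) := by
            apply mul_le_mul _ h (by positivity) (by positivity)
            exact mul_le_mul_of_nonneg_right hsq (by positivity)
        _ = 2 * ((t3 ^ 3 * z) * (t2 ^ 3 * y)) := by ring
        _ ≤ 2 * ((L * n ^ 3) * (L * n ^ 3)) := by linarith
        _ = _ := by ring
    have e2 := le_of_mul_le_mul_left e1 hn0
    calc (t1 * t2 * t3) ^ 6 * Q ^ 3 = ((t1 * t2 * t3) ^ 2 * Q) ^ 3 := by ring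
      _ ≤ (2 * L ^ 2 * n ^ 5) ^ 3 := pow_le_pow_left₀ (by positivity) e2 3
      _ = 8 * L ^ 6 * n ^ 15 * 1 := by ring
      _ ≤ 512 * L ^ 6 * n ^ 15 * n ^ 2 := by
          apply mul_le_mul _ (one_le_pow₀ hn) (by positivity) (by positivity)
          have : 0 ≤ L ^ 6 * n ^ 15 := by positivity
          nlinarith
      _ = _ := by ring
  · have e1 : n ^ 3 * ((t1 * t2 * t3) ^ 6 * Q ^ 3) ≤ n ^ 3 * (512 * L ^ 6 * n ^ 17) := by
      calc n ^ 3 * ((t1 * t2 * t3) ^ 6 * Q ^ 3) = (t1 * t2 * t3) ^ 6 * (n * Q) ^ 3 := by ring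
        _ ≤ (t1 * t2 * t3) ^ 6 * (512 * n ^ 2 * x ^ 2 * (z * y) ^ 2) :=
            mul_le_mul_of_nonneg_left h (by positivity)
        _ = 512 * n ^ 2 * ((t1 ^ 3 * x) ^ 2 * ((t3 ^ 3 * z) * (t2 ^ 3 * y)) ^ 2) := by ring
        _ ≤ 512 * n ^ 2 * ((L * n ^ 3) ^ 2 * ((L * n ^ 3) * (L * n ^ 3)) ^ 2) := by
            gcongr
        _ = _ := by ring
    exact le_of_mul_le_mul_left e1 (by positivity)

lemma zero_not_mem_pop (S : Finset ℝ) (t : ℕ) : (0 : ℝ) ∉ pop S t := by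
  simp [pop]

lemma n_bound_aux {A B : Finset ℝ} (hA0 : (0 : ℝ) ∉ A) (hA : A.Nonempty) {K : ℝ} (hK : 1 ≤ K)
    (h2 : ((A * A).card : ℝ) ≤ K * A.card) (h3 : ((A * (A * A)).card : ℝ) ≤ K * A.card)
    (h4 : ((A * (A * (A * A))).card : ℝ) ≤ K * A.card) {W : ℝ} (hW : 0 ≤ W)
    (hWb : 512 * (512 * K ^ 4) ^ 6 * (A.card : ℝ) ^ 14 *
      (2048 * (B.card : ℝ) ^ 4 * Hr B.card) ^ 3 ≤ W ^ 6)
    {t1 t2 t3 : ℕ} (ht1 : 1 ≤ t1) (h12 : t1 ≤ t2) (h13 : t1 ≤ t3) :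
    (t1 * t2 * t3 : ℝ) * (cyc B (pop A t1) (pop A t2) (pop A t3)).card ≤ W := by
  have ht2 := ht1.trans h12
  have ht3 := ht1.trans h13
  set N : ℝ := ((cyc B (pop A t1) (pop A t2) (pop A t3)).card : ℝ) with hN
  set Q : ℝ := ((tri (pop (A * A) t1) (pop (A * A) t2) (pop (A * A) t3)).card : ℝ) with hQ
  set n : ℝ := (A.card : ℝ) with hn
  set Tc := (2048 * (B.card : ℝ) ^ 4 * Hr B.card) with hTc
  have hn1 : 1 ≤ n := by
    rw [hn]; exact_mod_cast hA.card_pos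
  have hHr : 0 ≤ Hr B.card := Finset.sum_nonneg fun t _ => by positivity
  have hTc0 : 0 ≤ Tc := by positivity
  have hN0 : 0 ≤ N := by positivity
  have hQ0 : 0 ≤ Q := by positivity
  have hcb : n * N ^ 2 ≤ Q * Tc := cyc_bound hA0 hA ht1 ht2 ht3
  have hst := tri_st (A := A) (X := pop (A * A) t1) (Y := pop (A * A) t2) (Z := pop (A * A) t3)
    (Z' := pop (A * (A * A)) t3) hA0
    (fun q hq z hz => pop_dil hq (fun h => hA0 (h ▸ hq)) ht3 hz) (zero_not_mem_pop _ _)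
  have hL : (1 : ℝ) ≤ 512 * K ^ 4 := by
    have : 1 ≤ K ^ 4 := one_le_pow₀ hK
    linarith
  have hq := q_alg (n := n) (L := 512 * K ^ 4) (Q := Q) (t1 := t1) (t2 := t2) (t3 := t3) hn1 hL hQ0
    (Nat.cast_nonneg (pop (A * A) t1).card)
    (Nat.cast_nonneg (pop (A * A) t2).card) (Nat.cast_nonneg (pop (A * (A * A)) t3).card)
    (by exact_mod_cast ht1) (by exact_mod_cast h12) (by exact_mod_cast h13)
    (pop_bound hA0 hA hK h2 h3 ht1) (pop_bound hA0 hA hK h2 h3 ht2) (pop_bound hA0 hA hK h3 h4 ht3)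
    (by
      rcases hst with h | h
      · left
        rw [hn, hQ]
        exact_mod_cast h.le
      · right; exact h)
  have e : n ^ 3 * ((t1 * t2 * t3 : ℝ) * N) ^ 6 ≤ n ^ 3 * W ^ 6 := by
    calc n ^ 3 * ((t1 * t2 * t3 : ℝ) * N) ^ 6 = (t1 * t2 * t3 : ℝ) ^ 6 * (n * N ^ 2) ^ 3 := by ring
      _ ≤ (t1 * t2 * t3 : ℝ) ^ 6 * (Q * Tc) ^ 3 := by gcongr
      _ = ((t1 * t2 * t3 : ℝ) ^ 6 * Q ^ 3) * Tc ^ 3 := by ring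
      _ ≤ (512 * (512 * K ^ 4) ^ 6 * n ^ 17) * Tc ^ 3 := by gcongr
      _ = n ^ 3 * (512 * (512 * K ^ 4) ^ 6 * n ^ 14 * Tc ^ 3) := by ring
      _ ≤ _ := by gcongr
  exact le_of_pow_le_pow_left₀ (by norm_num) hW (le_of_mul_le_mul_left e (by positivity))

lemma n_bound {A B : Finset ℝ} (hA0 : (0 : ℝ) ∉ A) (hA : A.Nonempty) {K : ℝ} (hK : 1 ≤ K)
    (h2 : ((A * A).card : ℝ) ≤ K * A.card) (h3 : ((A * (A * A)).card : ℝ) ≤ K * A.card)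
    (h4 : ((A * (A * (A * A))).card : ℝ) ≤ K * A.card) {W : ℝ} (hW : 0 ≤ W)
    (hWb : 512 * (512 * K ^ 4) ^ 6 * (A.card : ℝ) ^ 14 *
      (2048 * (B.card : ℝ) ^ 4 * Hr B.card) ^ 3 ≤ W ^ 6)
    {t1 t2 t3 : ℕ} (ht1 : 1 ≤ t1) (ht2 : 1 ≤ t2) (ht3 : 1 ≤ t3) :
    (t1 * t2 * t3 : ℝ) * (cyc B (pop A t1) (pop A t2) (pop A t3)).card ≤ W := by
  by_cases ha : t1 ≤ t2 ∧ t1 ≤ t3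
  · exact n_bound_aux hA0 hA hK h2 h3 h4 hW hWb ht1 ha.1 ha.2
  by_cases hb : t2 ≤ t3 ∧ t2 ≤ t1
  · rw [cyc_rot]
    have := n_bound_aux hA0 hA hK h2 h3 h4 hW hWb ht2 hb.1 hb.2
    calc _ = _ := by ring
      _ ≤ _ := this
  · rw [cyc_rot, cyc_rot]
    have := n_bound_aux hA0 hA hK h2 h3 h4 hW hWb ht3 (t2 := t1) (t3 := t2) (by omega) (by omega)
    calc _ = _ := by ring
      _ ≤ _ := this

lemma tri_bound {A B : Finset ℝ} (hA0 : (0 : ℝ) ∉ A) (hA : A.Nonempty) {K : ℝ} (hK : 1 ≤ K)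
    (h2 : ((A * A).card : ℝ) ≤ K * A.card) (h3 : ((A * (A * A)).card : ℝ) ≤ K * A.card)
    (h4 : ((A * (A * (A * A))).card : ℝ) ≤ K * A.card) {W : ℝ} (hW : 0 ≤ W)
    (hWb : 512 * (512 * K ^ 4) ^ 6 * (A.card : ℝ) ^ 14 *
      (2048 * (B.card : ℝ) ^ 4 * Hr B.card) ^ 3 ≤ W ^ 6) :
    ∑ b ∈ B, ∑ b' ∈ B, ∑ b'' ∈ B, T0f A b b' * T0f A b' b'' * T0f A b'' b ≤
      W * Hr A.card ^ 3 := by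
  rw [tri_sum]
  have : W * Hr A.card ^ 3 = ∑ t1 ∈ Finset.Icc 1 A.card, ∑ t2 ∈ Finset.Icc 1 A.card,
      ∑ t3 ∈ Finset.Icc 1 A.card, W * ((1 : ℝ) / t1 * (1 / t2 * (1 / t3))) := by
    simp only [← Finset.mul_sum, ← Finset.sum_mul]
    rw [← Hr]
    ring
  rw [this]
  refine Finset.sum_le_sum fun t1 ht1 => Finset.sum_le_sum fun t2 ht2 =>
    Finset.sum_le_sum fun t3 ht3 => ?_
  rw [Finset.mem_Icc] at ht1 ht2 ht3
  have h := n_bound hA0 hA hK h2 h3 h4 hW hWb ht1.1 ht2.1 ht3.1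
  have p1 : (0 : ℝ) < t1 := by exact_mod_cast ht1.1
  have p2 : (0 : ℝ) < t2 := by exact_mod_cast ht2.1
  have p3 : (0 : ℝ) < t3 := by exact_mod_cast ht3.1
  have : W * ((1 : ℝ) / t1 * (1 / t2 * (1 / t3))) = W / (t1 * t2 * t3) := by field_simp
  rw [this, le_div_iff₀ (by positivity), mul_comm]
  exact h

/-- Main combinatorial inequality. -/
lemma energy_core {A B : Finset ℝ} (hA0 : (0 : ℝ) ∉ A) (hA : A.Nonempty) (hB : B.Nonempty)
    {K : ℝ} (hK : 1 ≤ K)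
    (h2 : ((A * A).card : ℝ) ≤ K * A.card) (h3 : ((A * (A * A)).card : ℝ) ≤ K * A.card)
    (h4 : ((A * (A * (A * A))).card : ℝ) ≤ K * A.card) {W R : ℝ} (hW : 0 ≤ W)
    (hWb : 512 * (512 * K ^ 4) ^ 6 * (A.card : ℝ) ^ 14 *
      (2048 * (B.card : ℝ) ^ 4 * Hr B.card) ^ 3 ≤ W ^ 6)
    (hR : 0 ≤ R) (hRb : 512 * K ^ 4 * (A.card : ℝ) ^ 2 ≤ R ^ 3) :
    (addE A B : ℝ) ≤ 2 * A.card * B.card ∨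
    (addE A B : ℝ) ^ 3 ≤ 32 * (B.card : ℝ) ^ 3 * (W * Hr A.card ^ 3) ∨
    (addE A B : ℝ) ^ 2 ≤ 32 * (B.card : ℝ) ^ 3 * (A.card * R) := by
  by_cases hE : (addE A B : ℝ) ≤ 2 * A.card * B.card
  · exact Or.inl hE
  right
  push Not at hE
  have hTE : (addE A B : ℝ) = ∑ b ∈ B, ∑ b' ∈ B, (rep A (b - b') : ℝ) := by
    rw [addE_eq]; push_cast; rfl
  have hT0 : ∀ b ∈ B, ∀ b' ∈ B, (rep A (b - b') : ℝ) =
      T0f A b b' + if b = b' then (A.card : ℝ) else 0 := by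
    intro b _ b' _
    unfold T0f
    split_ifs with h
    · rw [h, sub_self, rep_zero, zero_add]
    · rw [add_zero]
  have hp := psd_tri B (A - B) (fun b z => if z + b ∈ A then (1 : ℝ) else 0)
    (fun b b' => (rep A (b - b') : ℝ)) (T0f A) A.card (Nat.cast_nonneg _)
    (fun b hb b' hb' => rep_eq_sum A B hb) hT0 (fun b _ b' _ => T0f_nonneg A b b')
    (fun b _ b' _ => T0f_symm A b b')
  rw [← hTE] at hp
  set E : ℝ := (addE A B : ℝ) with hEdef
  set E0 := ∑ b ∈ B, ∑ b' ∈ B, T0f A b b' with hE0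
  have hEE0 : E = E0 + A.card * B.card := by
    rw [hTE, hE0, Finset.sum_congr rfl fun b hb => Finset.sum_congr rfl fun b' hb' => hT0 b hb b' hb']
    simp only [Finset.sum_add_distrib, Finset.sum_ite_eq]
    rw [Finset.sum_congr rfl fun b hb => if_pos hb]
    simp [mul_comm]
  have hnm : (0 : ℝ) < A.card * B.card := by
    have := hA.card_pos
    have := hB.card_pos
    positivity
  have hE0half : E / 2 ≤ E0 := by linarith
  have hEpos : 0 < E := by linarith
  have hsq : ∑ b ∈ B, ∑ b' ∈ B, T0f A b b' ^ 2 ≤ R * E := by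
    calc ∑ b ∈ B, ∑ b' ∈ B, T0f A b b' ^ 2 ≤ ∑ b ∈ B, ∑ b' ∈ B, R * T0f A b b' := by
          refine Finset.sum_le_sum fun b _ => Finset.sum_le_sum fun b' _ => ?_
          rw [sq]
          apply mul_le_mul_of_nonneg_right _ (T0f_nonneg A b b')
          unfold T0f
          split_ifs with h
          · exact hR
          · exact le_of_pow_le_pow_left₀ (by norm_num) hR
              ((rep_sup hA0 hA hK h2 h3 (sub_ne_zero.2 h)).trans hRb)
      _ = R * E0 := by simp only [← Finset.mul_sum]; rfl
      _ ≤ R * E := by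
          apply mul_le_mul_of_nonneg_left _ hR
          linarith
  have htri := tri_bound (B := B) hA0 hA hK h2 h3 h4 hW hWb
  set m : ℝ := (B.card : ℝ) with hm
  have hm0 : 0 ≤ m := by positivity
  have hn0 : (0 : ℝ) ≤ A.card := by positivity
  have hfin : E * E ^ 3 ≤ E * (16 * m ^ 3 * (W * Hr A.card ^ 3 + A.card * (R * E))) := by
    calc E * E ^ 3 = 16 * (E / 2) ^ 4 := by ring
      _ ≤ 16 * E0 ^ 4 := by gcongr
      _ ≤ 16 * (m ^ 3 * E * (W * Hr A.card ^ 3 + A.card * (R * E))) := by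
          apply mul_le_mul_of_nonneg_left _ (by norm_num)
          refine hp.trans ?_
          apply mul_le_mul_of_nonneg_left _ (by positivity)
          exact add_le_add htri (mul_le_mul_of_nonneg_left hsq hn0)
      _ = _ := by ring
  have hfin2 := le_of_mul_le_mul_left hfin hEpos
  by_cases hc : W * Hr A.card ^ 3 ≤ A.card * (R * E)
  · right
    have : E * E ^ 2 ≤ E * (32 * m ^ 3 * (A.card * R)) := by
      calc E * E ^ 2 = E ^ 3 := by ring
        _ ≤ _ := hfin2
        _ ≤ 16 * m ^ 3 * (A.card * (R * E) + A.card * (R * E)) := by gcongr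
        _ = _ := by ring
    exact le_of_mul_le_mul_left this hEpos
  · left
    push Not at hc
    calc E ^ 3 ≤ _ := hfin2
      _ ≤ 16 * m ^ 3 * (W * Hr A.card ^ 3 + W * Hr A.card ^ 3) := by gcongr
      _ = _ := by ring

lemma Hr_le (k : ℕ) (hk : 1 ≤ k) : Hr k ≤ 49 * (k : ℝ) ^ ((1 : ℝ) / 48) := by
  have h1 : Hr k = ((harmonic k : ℚ) : ℝ) := by
    rw [harmonic_eq_sum_Icc, Hr]
    push_cast
    simp
  have h2 := harmonic_le_one_add_log k
  have hk' : (1 : ℝ) ≤ k := by exact_mod_cast hk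
  have h3 := Real.log_le_rpow_div (x := (k : ℝ)) (by positivity) (ε := (1 : ℝ) / 48) (by norm_num)
  have h4 : (1 : ℝ) ≤ (k : ℝ) ^ ((1 : ℝ) / 48) := Real.one_le_rpow hk' (by norm_num)
  have h5 : (k : ℝ) ^ ((1 : ℝ) / 48) / (1 / 48) = 48 * (k : ℝ) ^ ((1 : ℝ) / 48) := by ring
  rw [h1]
  linarith

lemma fib_le (A B : Finset ℝ) (b : ℝ) :
    (B.filter (fun b' => b + b' ∈ A)).card ≤ A.card := by
  apply Finset.card_le_card_of_injOn (fun b' => b + b')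
  · intro x hx
    simp only [Finset.coe_filter, Set.mem_ofPred_eq] at hx
    exact hx.2
  · intro x _ y _ h
    simpa using h

lemma addE_triv (A B : Finset ℝ) : addE A B ≤ A.card ^ 2 * B.card := by
  rw [addE_eq]
  have : ∀ b ∈ B, ∑ b' ∈ B, rep A (b - b') ≤ A.card ^ 2 := by
    intro b _
    simp only [rep, Finset.card_filter]
    rw [Finset.sum_comm]
    calc _ ≤ ∑ a ∈ A, A.card := by
          apply Finset.sum_le_sum
          intro a _
          rw [← Finset.card_filter]
          refine le_trans (le_of_eq ?_) (fib_le A B (a - b))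
          congr 1
          apply Finset.filter_congr
          intro x _
          rw [show a - (b - x) = a - b + x by ring]
      _ = _ := by simp [sq]
  calc _ ≤ ∑ b ∈ B, A.card ^ 2 := Finset.sum_le_sum this
    _ = _ := by simp [mul_comm]

lemma addE_ge (A B : Finset ℝ) : A.card * B.card ≤ addE A B := by
  rw [addE_eq]
  calc A.card * B.card = ∑ b ∈ B, A.card := by simp [mul_comm]
    _ ≤ _ := by
      apply Finset.sum_le_sum
      intro b hb
      calc A.card = rep A (b - b) := by rw [sub_self, rep_zero]
        _ ≤ _ := Finset.single_le_sum (f := fun b' => rep A (b - b')) (fun _ _ => Nat.zero_le _) hb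

lemma rep_erase (A : Finset ℝ) (x : ℝ) :
    rep A x ≤ rep (A.erase 0) x + (if x ∈ A then 1 else 0) + (if -x ∈ A then 1 else 0) := by
  classical
  have hsub : A.filter (fun a => a - x ∈ A) ⊆
      ((A.erase 0).filter (fun a => a - x ∈ A.erase 0)) ∪ (if x ∈ A then {x} else ∅) ∪
        (if -x ∈ A then {0} else ∅) := by
    intro a ha
    rw [Finset.mem_filter] at ha
    simp only [Finset.mem_union, Finset.mem_filter, Finset.mem_erase]
    by_cases h0 : a = 0
    · right
      subst h0
      rw [zero_sub] at ha
      simp [ha.2]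
    · by_cases h1 : a - x = 0
      · left; right
        have : a = x := by linarith
        subst this
        simp [ha.1]
      · left; left
        exact ⟨⟨h0, ha.1⟩, h1, ha.2⟩
  refine (Finset.card_le_card hsub).trans ((Finset.card_union_le _ _).trans ?_)
  refine add_le_add ((Finset.card_union_le _ _).trans (add_le_add le_rfl ?_)) ?_
  · split_ifs <;> simp
  · split_ifs <;> simp

lemma addE_erase (A B : Finset ℝ) : addE A B ≤ addE (A.erase 0) B + 2 * (A.card * B.card) := by
  rw [addE_eq, addE_eq]
  have h1 : ∑ b ∈ B, ∑ b' ∈ B, (if -(b - b') ∈ A then 1 else 0) ≤ A.card * B.card := by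
    calc _ ≤ ∑ b ∈ B, A.card := by
          apply Finset.sum_le_sum
          intro b _
          rw [← Finset.card_filter]
          refine le_trans (le_of_eq ?_) (fib_le A B (- b))
          congr 1
          apply Finset.filter_congr
          intro x _
          rw [show -(b - x) = - b + x by ring]
      _ = _ := by simp [mul_comm]
  have h2 : ∑ b ∈ B, ∑ b' ∈ B, (if b - b' ∈ A then 1 else 0) ≤ A.card * B.card := by
    rw [Finset.sum_comm]
    refine le_trans (le_of_eq ?_) h1
    simp only [neg_sub]
  calc _ ≤ ∑ b ∈ B, ∑ b' ∈ B, (rep (A.erase 0) (b - b') + (if b - b' ∈ A then 1 else 0) +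
        (if -(b - b') ∈ A then 1 else 0)) :=
        Finset.sum_le_sum fun b _ => Finset.sum_le_sum fun b' _ => rep_erase A _
    _ ≤ _ := by
      simp only [Finset.sum_add_distrib]
      omega

lemma pluen {A : Finset ℝ} (hA0 : (0 : ℝ) ∉ A) (hA : A.Nonempty) {M : ℝ} (hM : 1 ≤ M)
    (h : ((A * A).card : ℝ) ≤ M * A.card) :
    ((A * A).card : ℝ) ≤ M ^ 4 * A.card ∧ ((A * (A * A)).card : ℝ) ≤ M ^ 4 * A.card ∧
    ((A * (A * (A * A))).card : ℝ) ≤ M ^ 4 * A.card := by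
  classical
  set f : ℝˣ →* ℝ := Units.coeHom ℝ with hf
  have hfi : Function.Injective f := Units.val_injective
  set U : Finset ℝˣ := A.preimage f (hfi.injOn) with hU
  have hAU : A = U.image f := by
    ext x
    simp only [Finset.mem_image, hU, Finset.mem_preimage]
    constructor
    · intro hx
      have : x ≠ 0 := fun h => hA0 (h ▸ hx)
      exact ⟨Units.mk0 x this, by simpa [hf] using hx, by simp [hf]⟩
    · rintro ⟨u, hu, rfl⟩; exact hu
  have c1 : A.card = U.card := by rw [hAU, Finset.card_image_of_injective _ hfi]
  have c2 : (A * A).card = (U * U).card := by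
    rw [hAU, ← Finset.image_mul, Finset.card_image_of_injective _ hfi]
  have c3 : (A * (A * A)).card = (U * (U * U)).card := by
    rw [hAU, ← Finset.image_mul, ← Finset.image_mul, Finset.card_image_of_injective _ hfi]
  have c4 : (A * (A * (A * A))).card = (U * (U * (U * U))).card := by
    rw [hAU, ← Finset.image_mul, ← Finset.image_mul, ← Finset.image_mul,
      Finset.card_image_of_injective _ hfi]
  have hUn : U.Nonempty := by
    rw [← Finset.card_pos, ← c1]; exact hA.card_pos
  have hn : (0 : ℝ) < A.card := by exact_mod_cast hA.card_pos
  have key : ∀ k : ℕ, k ≤ 4 → ((U ^ k).card : ℝ) ≤ M ^ 4 * A.card := by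
    intro k hk
    have := Finset.pluennecke_ruzsa_inequality_pow_mul hUn U k
    have h' : ((U ^ k).card : ℝ) ≤ (((U * U).card : ℝ) / U.card) ^ k * U.card := by
      have h'' := (NNRat.cast_le (K := ℝ)).2 this
      simpa only [NNRat.cast_natCast, NNRat.cast_mul, NNRat.cast_pow, NNRat.cast_div] using h''
    rw [← c1, ← c2] at h'
    refine h'.trans (mul_le_mul_of_nonneg_right ?_ hn.le)
    calc (((A * A).card : ℝ) / A.card) ^ k ≤ M ^ k := by
          apply pow_le_pow_left₀ (div_nonneg (Nat.cast_nonneg _) hn.le)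
          rw [div_le_iff₀ hn]; exact h
      _ ≤ M ^ 4 := pow_le_pow_right₀ hM hk
  refine ⟨?_, ?_, ?_⟩
  · rw [c2, show U * U = U ^ 2 by rw [sq]]
    exact key 2 (by norm_num)
  · rw [c3, show U * (U * U) = U ^ 3 by rw [pow_succ, sq, mul_assoc]]
    exact key 3 (by norm_num)
  · rw [c4, show U * (U * (U * U)) = U ^ 4 by rw [pow_succ, pow_succ, sq, mul_assoc, mul_assoc]]
    exact key 4 (by norm_num)

lemma energy_uv {A B : Finset ℝ} (hA0 : (0 : ℝ) ∉ A) (hA : A.Nonempty) (hB : B.Nonempty)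
    {K : ℝ} (hK : 1 ≤ K)
    (h2 : ((A * A).card : ℝ) ≤ K * A.card) (h3 : ((A * (A * A)).card : ℝ) ≤ K * A.card)
    (h4 : ((A * (A * (A * A))).card : ℝ) ≤ K * A.card) (hnm : A.card ≤ B.card ^ 2)
    {u v : ℝ} (hu : 1 ≤ u) (hv : 1 ≤ v) (hun : (A.card : ℝ) = u ^ 144) (hvm : (B.card : ℝ) = v ^ 6)
    (hH : ∀ k : ℕ, 1 ≤ k → (k : ℝ) ≤ u ^ 288 → Hr k ≤ 49 * u ^ 6)
    (hHn : Hr A.card ≤ 49 * u ^ 3) :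
    (addE A B : ℝ) ≤ 43904 * K ^ 2 * (v ^ 10 * u ^ 116) := by
  have hu0 : 0 < u := by linarith
  have hv0 : 0 < v := by linarith
  have huv : u ^ 12 ≤ v := by
    have : (A.card : ℝ) ≤ (B.card : ℝ) ^ 2 := by exact_mod_cast hnm
    rw [hun, hvm] at this
    apply le_of_pow_le_pow_left₀ (n := 12) (by norm_num) hv0.le
    calc (u ^ 12) ^ 12 = u ^ 144 := by ring
      _ ≤ _ := this
      _ = _ := by ring
  have hK1 : 1 ≤ K ^ 2 := one_le_pow₀ hK
  have hE0 : (0 : ℝ) ≤ addE A B := Nat.cast_nonneg _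
  have hX0 : 0 < v ^ 10 * u ^ 116 := by positivity
  have hX1 : v ^ 10 * u ^ 116 ≤ K ^ 2 * (v ^ 10 * u ^ 116) := le_mul_of_one_le_left hX0.le hK1
  by_cases hm : u ^ 48 ≤ v
  · have h := addE_triv A B
    have h' : (addE A B : ℝ) ≤ (A.card : ℝ) ^ 2 * B.card := by exact_mod_cast h
    have : (A.card : ℝ) ^ 2 * B.card ≤ v ^ 10 * u ^ 116 := by
      rw [hun, hvm]
      calc (u ^ 144) ^ 2 * v ^ 6 = u ^ 172 * v ^ 6 * u ^ 116 := by ring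
        _ ≤ (u ^ 48) ^ 4 * v ^ 6 * u ^ 116 := by
            rw [← pow_mul]
            gcongr
            norm_num
        _ ≤ v ^ 4 * v ^ 6 * u ^ 116 := by gcongr
        _ = _ := by ring
    linarith
  push Not at hm
  have hHm : Hr B.card ≤ 49 * u ^ 6 := by
    apply hH _ hB.card_pos
    rw [hvm]
    calc v ^ 6 ≤ (u ^ 48) ^ 6 := by gcongr
      _ = _ := by ring
  have hHm0 : 0 ≤ Hr B.card := Finset.sum_nonneg fun t _ => by positivity
  have hHn0 : 0 ≤ Hr A.card := Finset.sum_nonneg fun t _ => by positivity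
  have hcore := energy_core hA0 hA hB hK h2 h3 h4
    (W := 458752 * K ^ 4 * u ^ 339 * v ^ 12) (R := 8 * K ^ 2 * u ^ 96) (by positivity)
    (by
      rw [hun, hvm]
      calc _ ≤ 512 * (512 * K ^ 4) ^ 6 * (u ^ 144) ^ 14 * (2048 * (v ^ 6) ^ 4 * (49 * u ^ 6)) ^ 3 := by
            gcongr
        _ = _ := by ring)
    (by positivity)
    (by
      rw [hun]
      have : K ^ 4 ≤ K ^ 6 := pow_le_pow_right₀ hK (by norm_num)
      calc _ ≤ 512 * K ^ 6 * (u ^ 144) ^ 2 := by gcongr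
        _ = _ := by ring)
  rcases hcore with h | h | h
  · rw [hun, hvm] at h
    have : u ^ 144 * v ^ 6 ≤ v ^ 10 * u ^ 116 := by
      calc u ^ 144 * v ^ 6 = u ^ 28 * v ^ 6 * u ^ 116 := by ring
        _ ≤ (u ^ 12) ^ 4 * v ^ 6 * u ^ 116 := by
            rw [← pow_mul]
            gcongr
            norm_num
        _ ≤ v ^ 4 * v ^ 6 * u ^ 116 := by gcongr
        _ = _ := by ring
    linarith
  · apply le_of_pow_le_pow_left₀ (n := 3) (by norm_num) (by positivity)
    have : K ^ 4 ≤ K ^ 6 := pow_le_pow_right₀ hK (by norm_num)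
    rw [hvm] at h
    calc _ ≤ _ := h
      _ ≤ 32 * (v ^ 6) ^ 3 * (458752 * K ^ 6 * u ^ 339 * v ^ 12 * (49 * u ^ 3) ^ 3) := by gcongr
      _ = 1727094849536 * (K ^ 6 * v ^ 30 * u ^ 348) := by ring
      _ ≤ 43904 ^ 3 * (K ^ 6 * v ^ 30 * u ^ 348) := by
          apply mul_le_mul_of_nonneg_right (by norm_num) (by positivity)
      _ = _ := by ring
  · rw [hvm, hun] at h
    have h' : (addE A B : ℝ) ≤ 16 * K * v ^ 9 * u ^ 120 := by
      apply le_of_pow_le_pow_left₀ (n := 2) (by norm_num) (by positivity)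
      calc _ ≤ _ := h
        _ = _ := by ring
    have hK2 : K ≤ K ^ 2 := by nlinarith
    have hu4 : u ^ 4 ≤ v := (pow_le_pow_right₀ hu (by norm_num)).trans huv
    calc _ ≤ _ := h'
      _ = 16 * K * (v ^ 9 * u ^ 4 * u ^ 116) := by ring
      _ ≤ 43904 * K ^ 2 * (v ^ 9 * v * u ^ 116) := by
          gcongr
          norm_num
      _ = _ := by ring

lemma energy_no_zero {A B : Finset ℝ} (hA0 : (0 : ℝ) ∉ A) (hA : A.Nonempty) (hB : B.Nonempty)
    {M : ℝ} (hM : 1 ≤ M)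
    (h : ((A * A).card : ℝ) ≤ M * A.card) (hnm : A.card ≤ B.card ^ 2) :
    (addE A B : ℝ) ≤ 43904 * M ^ 8 *
      ((B.card : ℝ) ^ ((5 : ℝ) / 3) * (A.card : ℝ) ^ ((5 : ℝ) / 6 - 1 / 36)) := by
  obtain ⟨h2, h3, h4⟩ := pluen hA0 hA hM h
  have hn : (1 : ℝ) ≤ A.card := by exact_mod_cast hA.card_pos
  have hm : (1 : ℝ) ≤ B.card := by exact_mod_cast hB.card_pos
  have hn0 : (0 : ℝ) ≤ A.card := by linarith
  have hm0 : (0 : ℝ) ≤ B.card := by linarith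
  have hu1 : (1 : ℝ) ≤ (A.card : ℝ) ^ ((1 : ℝ) / 144) := Real.one_le_rpow hn (by norm_num)
  have hupow : ∀ k : ℕ, ((A.card : ℝ) ^ ((1 : ℝ) / 144)) ^ k = (A.card : ℝ) ^ ((k : ℝ) / 144) := by
    intro k
    rw [← Real.rpow_natCast, ← Real.rpow_mul hn0]
    congr 1; ring
  have hvpow : ∀ k : ℕ, ((B.card : ℝ) ^ ((1 : ℝ) / 6)) ^ k = (B.card : ℝ) ^ ((k : ℝ) / 6) := by
    intro k
    rw [← Real.rpow_natCast, ← Real.rpow_mul hm0]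
    congr 1; ring
  have := energy_uv hA0 hA hB (one_le_pow₀ hM : 1 ≤ M ^ 4) h2 h3 h4 hnm
    (u := (A.card : ℝ) ^ ((1 : ℝ) / 144)) (v := (B.card : ℝ) ^ ((1 : ℝ) / 6))
    hu1
    (Real.one_le_rpow hm (by norm_num)) (by rw [hupow]; norm_num) (by rw [hvpow]; norm_num)
    (by
      intro k hk hk'
      refine (Hr_le k hk).trans (mul_le_mul_of_nonneg_left ?_ (by norm_num))
      calc (k : ℝ) ^ ((1 : ℝ) / 48) ≤ (((A.card : ℝ) ^ ((1 : ℝ) / 144)) ^ 288) ^ ((1 : ℝ) / 48) :=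
            Real.rpow_le_rpow (by positivity) hk' (by norm_num)
        _ = _ := by
            rw [hupow, hupow, ← Real.rpow_mul hn0]
            norm_num)
    (by
      rw [hupow]
      refine (Hr_le _ hA.card_pos).trans (le_of_eq ?_)
      norm_num)
  rw [hupow, hvpow] at this
  refine this.trans (le_of_eq ?_)
  rw [← pow_mul]
  norm_num

theorem asymmetric_additive_energy :
    ∃ c C : ℝ, 0 < c ∧ 1 ≤ C ∧
      ∀ M : ℝ, 1 ≤ M →
        ∀ A B : Finset ℝ, A.Nonempty → B.Nonempty →
          ((A * A).card : ℝ) ≤ M * (A.card : ℝ) →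
          A.card ≤ B.card ^ 2 →
          (addE A B : ℝ) ≤
            C * M ^ C * (B.card : ℝ) ^ ((5 : ℝ) / 3) *
              (A.card : ℝ) ^ ((5 : ℝ) / 6 - c) := by
  refine ⟨1 / 36, 5 * (43904 * 256), by norm_num, by norm_num, ?_⟩
  intro M hM A B hA hB hAA hnm
  have hM8 : M ^ 8 ≤ M ^ ((5 : ℝ) * (43904 * 256)) := by
    rw [← Real.rpow_natCast]
    exact Real.rpow_le_rpow_of_exponent_le hM (by norm_num)
  have hM1 : 1 ≤ M ^ 8 := one_le_pow₀ hM
  have hn : (1 : ℝ) ≤ A.card := by exact_mod_cast hA.card_pos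
  have hm : (1 : ℝ) ≤ B.card := by exact_mod_cast hB.card_pos
  set X : ℝ := (B.card : ℝ) ^ ((5 : ℝ) / 3) * (A.card : ℝ) ^ ((5 : ℝ) / 6 - 1 / 36) with hX
  have hX0 : 0 ≤ X := by positivity
  suffices hs : (addE A B : ℝ) ≤ 5 * (43904 * 256) * M ^ 8 * X by
    refine hs.trans ?_
    have e : 5 * (43904 * 256) * M ^ ((5 : ℝ) * (43904 * 256)) * (B.card : ℝ) ^ ((5 : ℝ) / 3) *
        (A.card : ℝ) ^ ((5 : ℝ) / 6 - 1 / 36) =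
        5 * (43904 * 256) * M ^ ((5 : ℝ) * (43904 * 256)) * X := by rw [hX]; ring
    rw [e]
    exact mul_le_mul_of_nonneg_right (mul_le_mul_of_nonneg_left hM8 (by norm_num)) hX0
  have hmX : (B.card : ℝ) ≤ X := by
    have e1 : (B.card : ℝ) ≤ (B.card : ℝ) ^ ((5 : ℝ) / 3) := by
      conv_lhs => rw [← Real.rpow_one (B.card : ℝ)]
      exact Real.rpow_le_rpow_of_exponent_le hm (by norm_num)
    have e2 : (1 : ℝ) ≤ (A.card : ℝ) ^ ((5 : ℝ) / 6 - 1 / 36) := Real.one_le_rpow hn (by norm_num)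
    exact e1.trans (le_mul_of_one_le_right (by positivity) e2)
  by_cases hA' : (A.erase 0).Nonempty
  · have hle : A.card ≤ (A.erase 0).card + 1 := by
      have := Finset.pred_card_le_card_erase (s := A) (a := (0 : ℝ)); omega
    have hle' : A.card ≤ 2 * (A.erase 0).card := by
      have := hA'.card_pos; omega
    have hleR : (A.card : ℝ) ≤ 2 * ((A.erase 0).card : ℝ) := by exact_mod_cast hle'
    have hsub : A.erase 0 ⊆ A := Finset.erase_subset _ _
    have hcard : (A.erase 0).card ≤ A.card := Finset.card_le_card hsub
    have hAA' : (((A.erase 0) * (A.erase 0)).card : ℝ) ≤ (2 * M) * ((A.erase 0).card : ℝ) := by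
      have : (((A.erase 0) * (A.erase 0)).card : ℝ) ≤ ((A * A).card : ℝ) := by
        exact_mod_cast Finset.card_le_card (Finset.mul_subset_mul hsub hsub)
      nlinarith
    have key := energy_no_zero (Finset.notMem_erase 0 A) hA' hB (by linarith : 1 ≤ 2 * M) hAA'
      (hcard.trans hnm)
    have hXX : (B.card : ℝ) ^ ((5 : ℝ) / 3) * ((A.erase 0).card : ℝ) ^ ((5 : ℝ) / 6 - 1 / 36) ≤ X := by
      rw [hX]
      apply mul_le_mul_of_nonneg_left _ (by positivity)
      exact Real.rpow_le_rpow (by positivity) (by exact_mod_cast hcard) (by norm_num)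
    have key2 : (addE (A.erase 0) B : ℝ) ≤ 43904 * (2 * M) ^ 8 * X :=
      key.trans (mul_le_mul_of_nonneg_left hXX (by positivity))
    have g1 := addE_erase A B
    have g2 := addE_ge (A.erase 0) B
    have g3 : addE A B ≤ 5 * addE (A.erase 0) B := by
      have : A.card * B.card ≤ 2 * ((A.erase 0).card * B.card) := by
        rw [← mul_assoc]
        exact Nat.mul_le_mul_right _ hle'
      omega
    have g4 : (addE A B : ℝ) ≤ 5 * (addE (A.erase 0) B : ℝ) := by exact_mod_cast g3
    calc _ ≤ _ := g4
      _ ≤ 5 * (43904 * (2 * M) ^ 8 * X) := by linarith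
      _ = _ := by ring
  · have hc : A.card ≤ 1 := by
      rw [Finset.not_nonempty_iff_eq_empty] at hA'
      have := Finset.pred_card_le_card_erase (s := A) (a := (0 : ℝ))
      rw [hA', Finset.card_empty] at this
      omega
    have g := addE_triv A B
    have g' : addE A B ≤ B.card := by
      refine g.trans ?_
      have : A.card ^ 2 ≤ 1 := by
        have := Nat.pow_le_pow_left hc 2
        simpa using this
      calc _ ≤ 1 * B.card := Nat.mul_le_mul_right _ this
        _ = _ := one_mul _
    have g'' : (addE A B : ℝ) ≤ B.card := by exact_mod_cast g'
    have : X ≤ 5 * (43904 * 256) * M ^ 8 * X := by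
      apply le_mul_of_one_le_left hX0
      linarith
    linarith
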